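/- arXiv:1910.04401 — 13 statements merged into one kernel-verified Lean document; each statement's English description precedes it below -/
import Mathlib

section
/- Every matching market admits at least one stable matching. -/
/-- A matching market: men `M` and women `W`; each man has a strict preference
order over `W ∪ {∅}` and each woman over `M ∪ {∅}`, encoded by injective rank
functions (a strictly higher rank means strictly more preferred); `none`
plays the role of `∅` (being unmatched), and partners ranked below `none`
are unacceptable. -/
structure Market (M W : Type*) where
  mRank : M → Option W → ℕ
  wRank : W → Option M → ℕ
  mRank_inj : ∀ m, Function.Injective (mRank m)
  wRank_inj : ∀ w, Function.Injective (wRank w)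

/-- A matching: `mu` assigns each man a woman or `none`, `nu` assigns each
woman a man or `none`, and `μ(m) = w ↔ μ(w) = m`. -/
structure Matching (M W : Type*) where
  mu : M → Option W
  nu : W → Option M
  consistent : ∀ m w, mu m = some w ↔ nu w = some m

variable {M W : Type*}

/-- Every matched agent prefers their partner to `∅`. -/
def Market.IndivRational (mkt : Market M W) (μ : Matching M W) : Prop :=
  (∀ m w, μ.mu m = some w → mkt.mRank m none < mkt.mRank m (some w)) ∧
  (∀ w m, μ.nu w = some m → mkt.wRank w none < mkt.wRank w (some m))

/-- `(m, w)` is a blocking pair for `μ`: they are not matched to each other,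
`w ≻_m μ(m)` and `m ≻_w μ(w)`. -/
def Market.Blocking (mkt : Market M W) (μ : Matching M W) (m : M) (w : W) : Prop :=
  μ.mu m ≠ some w ∧
  mkt.mRank m (μ.mu m) < mkt.mRank m (some w) ∧
  mkt.wRank w (μ.nu w) < mkt.wRank w (some m)

/-- A matching is stable if it is individually rational and has no blocking pair. -/
def Market.Stable (mkt : Market M W) (μ : Matching M W) : Prop :=
  mkt.IndivRational μ ∧ ∀ m w, ¬ mkt.Blocking μ m w

/-- Woman-dominance: `μ ≥ μ'` iff every woman weakly prefers her partner in `μ`. -/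
def Market.Dom (mkt : Market M W) (μ μ' : Matching M W) : Prop :=
  ∀ w, mkt.wRank w (μ'.nu w) ≤ mkt.wRank w (μ.nu w)

/-- Strict woman-dominance: `μ > μ'`. -/
def Market.StrictDom (mkt : Market M W) (μ μ' : Matching M W) : Prop :=
  mkt.Dom μ μ' ∧ μ ≠ μ'

/-- `μ'` covers `μ` in the woman-dominance order on stable matchings. -/
def Market.Covers (mkt : Market M W) (μ' μ : Matching M W) : Prop :=
  mkt.StrictDom μ' μ ∧
  ¬ ∃ μ'' : Matching M W, mkt.Stable μ'' ∧ mkt.StrictDom μ' μ'' ∧ mkt.StrictDom μ'' μ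

/-- `μ'` is the elimination of the list `ρ = [(w_0,m_0),…,(w_{k-1},m_{k-1})]`
from `μ`: `k ≥ 2`, the women (resp. men) in `ρ` are distinct, `μ(w_i) = m_i`,
`μ'(m_i) = w_{(i+1) mod k}`, and every agent not appearing in `ρ` has the same
partner in `μ` and `μ'`. -/
def Matching.IsElimOf (μ' μ : Matching M W) (ρ : List (W × M)) : Prop :=
  2 ≤ ρ.length ∧
  (ρ.map Prod.fst).Nodup ∧ (ρ.map Prod.snd).Nodup ∧
  (∀ i : Fin ρ.length, μ.nu (ρ.get i).1 = some (ρ.get i).2) ∧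
  (∀ i : Fin ρ.length, μ'.mu (ρ.get i).2 =
    some (ρ.get ⟨(i.1 + 1) % ρ.length,
      Nat.mod_lt _ (Nat.lt_of_le_of_lt (Nat.zero_le _) i.isLt)⟩).1) ∧
  (∀ m : M, m ∉ ρ.map Prod.snd → μ'.mu m = μ.mu m) ∧
  (∀ w : W, w ∉ ρ.map Prod.fst → μ'.nu w = μ.nu w)

/-- `ρ` is a rotation exposed in `μ`: the elimination of `ρ` from `μ` is a
stable matching which covers `μ`. -/
def Market.ExposedRotation (mkt : Market M W) (μ : Matching M W) (ρ : List (W × M)) : Prop :=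
  ∃ μ' : Matching M W, Matching.IsElimOf μ' μ ρ ∧ mkt.Stable μ' ∧ mkt.Covers μ' μ

/-- `ρ` belongs to the set `Π` of all rotations, i.e. it is exposed in some
stable matching. -/
def Market.InPi (mkt : Market M W) (ρ : List (W × M)) : Prop :=
  ∃ μ : Matching M W, mkt.Stable μ ∧ mkt.ExposedRotation μ ρ

/-- The cyclically next index in a rotation. -/
def RotNext (ρ : List (W × M)) (i : Fin ρ.length) : Fin ρ.length :=
  ⟨(i.1 + 1) % ρ.length, Nat.mod_lt _ (Nat.lt_of_le_of_lt (Nat.zero_le _) i.isLt)⟩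

/-- The cyclically previous index in a rotation. -/
def RotPrev (ρ : List (W × M)) (i : Fin ρ.length) : Fin ρ.length :=
  ⟨(i.1 + ρ.length - 1) % ρ.length, Nat.mod_lt _ (Nat.lt_of_le_of_lt (Nat.zero_le _) i.isLt)⟩

/-- `ρ` moves man `m` from `w` to `w'` (i.e. `m = m_i`, `w = w_i`, `w' = w_{i+1}`). -/
def MovesManFromTo (ρ : List (W × M)) (m : M) (w w' : W) : Prop :=
  ∃ i : Fin ρ.length, (ρ.get i).2 = m ∧ (ρ.get i).1 = w ∧ (ρ.get (RotNext ρ i)).1 = w'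

/-- `ρ` moves woman `w` from `m` to `m'` (i.e. `w = w_i`, `m = m_i`, `m' = m_{i-1}`). -/
def MovesWomanFromTo (ρ : List (W × M)) (w : W) (m m' : M) : Prop :=
  ∃ i : Fin ρ.length, (ρ.get i).1 = w ∧ (ρ.get i).2 = m ∧ (ρ.get (RotPrev ρ i)).2 = m'

/-- `ρ1` is a type 1 predecessor of `ρ2`: `ρ1` moves some man `m` to a woman
`w` and the pair `(w, m)` appears in `ρ2`. -/
def Market.Type1Pred (_mkt : Market M W) (ρ1 ρ2 : List (W × M)) : Prop :=
  ∃ (w : W) (m : M), (∃ w0 : W, MovesManFromTo ρ1 m w0 w) ∧ (w, m) ∈ ρ2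

/-- `ρ1` is a type 2 predecessor of `ρ2`: `ρ1` moves some woman `w` from a man
strictly below `m` to a man strictly above `m`, and `ρ2` moves `m` from a woman
strictly above `w` to a woman strictly below `w`. -/
def Market.Type2Pred (mkt : Market M W) (ρ1 ρ2 : List (W × M)) : Prop :=
  ∃ (m : M) (w : W) (mlo mhi : M) (whi wlo : W),
    MovesWomanFromTo ρ1 w mlo mhi ∧
    mkt.wRank w (some mlo) < mkt.wRank w (some m) ∧
    mkt.wRank w (some m) < mkt.wRank w (some mhi) ∧
    MovesManFromTo ρ2 m whi wlo ∧
    mkt.mRank m (some wlo) < mkt.mRank m (some w) ∧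
    mkt.mRank m (some w) < mkt.mRank m (some whi)

/-- `ρ1` is a (type 1 or type 2) predecessor of `ρ2`; these are the edges of
the predecessor graph `G(Π)`. -/
def Market.Pred (mkt : Market M W) (ρ1 ρ2 : List (W × M)) : Prop :=
  mkt.Type1Pred ρ1 ρ2 ∨ mkt.Type2Pred ρ1 ρ2

/-- `σ` assigns each woman the more preferred of her partners in `μ` and `μ'`. -/
def Market.IsJoin (mkt : Market M W) (μ μ' σ : Matching M W) : Prop :=
  ∀ w, σ.nu w = if mkt.wRank w (μ'.nu w) ≤ mkt.wRank w (μ.nu w) then μ.nu w else μ'.nu w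

/-- `σ` assigns each woman the less preferred of her partners in `μ` and `μ'`. -/
def Market.IsMeet (mkt : Market M W) (μ μ' σ : Matching M W) : Prop :=
  ∀ w, σ.nu w = if mkt.wRank w (μ.nu w) ≤ mkt.wRank w (μ'.nu w) then μ.nu w else μ'.nu w

theorem exists_best {α : Type*} [Finite α] (f : Option α → ℕ) (P : α → Prop) :
    ∃ o : Option α, (∀ a, o = some a → P a) ∧ f none ≤ f o ∧
      ∀ a, P a → f (some a) ≤ f o := by
  obtain ⟨o, ho, hmax⟩ := Set.exists_max_image {o : Option α | ∀ a, o = some a → P a} f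
    (Set.toFinite _) ⟨none, by simp⟩
  refine ⟨o, ho, hmax none (by simp), fun a ha => hmax (some a) ?_⟩
  intro b hb
  cases hb
  exact ha

/-- Every matching market admits at least one stable matching. -/
theorem exists_stable_matching {M W : Type*} [Fintype M] [Fintype W] (mkt : Market M W) :
    ∃ μ : Matching M W, mkt.Stable μ := by
  classical
  choose best hb1 hb2 hb3 using
    fun (m : M) (P : W → Prop) => exists_best (mkt.mRank m) P
  choose wbest hw1 hw2 hw3 using
    fun (w : W) (P : M → Prop) => exists_best (mkt.wRank w) P
  let C : Set (M × W) → M → Option W := fun R m => best m (fun w => (m, w) ∉ R)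
  let D : Set (M × W) → W → Option M := fun R w => wbest w (fun m => C R m = some w)
  have C1 : ∀ R m w, C R m = some w → (m, w) ∉ R := fun R m w h => hb1 m _ w h
  have C2 : ∀ R m, mkt.mRank m none ≤ mkt.mRank m (C R m) := fun R m => hb2 m _
  have C3 : ∀ R m w, (m, w) ∉ R → mkt.mRank m (some w) ≤ mkt.mRank m (C R m) :=
    fun R m w h => hb3 m (fun w => (m, w) ∉ R) w h
  have D1 : ∀ R w m, D R w = some m → C R m = some w := fun R w m h => hw1 w _ m h
  have D2 : ∀ R w, mkt.wRank w none ≤ mkt.wRank w (D R w) := fun R w => hw2 w _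
  have D3 : ∀ R w m, C R m = some w → mkt.wRank w (some m) ≤ mkt.wRank w (D R w) :=
    fun R w m h => hw3 w (fun m => C R m = some w) m h
  have Ccongr : ∀ R R' m, (∀ w, (m, w) ∈ R ↔ (m, w) ∈ R') → C R m = C R' m := by
    intro R R' m h
    simp only [C, h]
  clear_value D
  clear_value C
  let Inv : Set (M × W) → Prop := fun R =>
    ∀ m w, (m, w) ∈ R → mkt.wRank w (some m) < mkt.wRank w (D R w)
  obtain ⟨R, hR, hmax⟩ := Set.exists_max_image {R | Inv R} Set.ncard
    (Set.toFinite _) ⟨∅, by intro m w h; exact absurd h (by simp)⟩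
  have key : ∀ m w, C R m = some w → D R w = some m := by
    intro m0 w0 h0
    by_contra hne
    have hlt : mkt.wRank w0 (some m0) < mkt.wRank w0 (D R w0) :=
      lt_of_le_of_ne (D3 R w0 m0 h0) (fun h => hne (mkt.wRank_inj w0 h).symm)
    have hmono : ∀ w, mkt.wRank w (D R w) ≤ mkt.wRank w (D (insert (m0, w0) R) w) := by
      intro w
      cases hD : D R w with
      | none => exact D2 _ w
      | some m1 =>
        have hC := D1 R w m1 hD
        have hm : m1 ≠ m0 := by
          rintro rfl
          rw [h0] at hC
          cases hC
          exact hne hD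
        apply D3
        rw [← hC]
        apply Ccongr
        intro w'
        simp [hm]
    have hI : Inv (insert (m0, w0) R) := by
      intro m w h
      rcases h with h | h
      · cases h
        exact lt_of_lt_of_le hlt (hmono _)
      · exact lt_of_lt_of_le (hR m w h) (hmono w)
    have h1 := hmax _ hI
    rw [Set.ncard_insert_of_notMem (C1 R m0 w0 h0) (Set.toFinite _)] at h1
    omega
  refine ⟨⟨C R, D R, fun m w => ⟨key m w, D1 R w m⟩⟩, ⟨?_, ?_⟩, ?_⟩
  · intro m w h
    change C R m = some w at h
    have := C2 R m
    rw [h] at this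
    exact lt_of_le_of_ne this (fun e => by cases mkt.mRank_inj m e)
  · intro w m h
    change D R w = some m at h
    have := D2 R w
    rw [h] at this
    exact lt_of_le_of_ne this (fun e => by cases mkt.wRank_inj w e)
  · rintro m w ⟨-, h2, h3⟩
    change mkt.mRank m (C R m) < _ at h2
    change mkt.wRank w (D R w) < _ at h3
    by_cases h : (m, w) ∈ R
    · exact absurd (hR m w h) (by omega)
    · exact absurd (C3 R m w h) (by omega)
end

section
/- In every matching market there exists a man-optimal stable matching: a stable matching μ0 such that for every stable matching μ and every man m, μ0(m) ⪰_m μ(m). -/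
variable {M W : Type*}

def GSCand {M W : Type*} (R : Set (M × W)) (m : M) (o : Option W) : Prop :=
  ∀ w, o = some w → (m, w) ∉ R

def GSTop {M W : Type*} (mkt : Market M W) (R : Set (M × W)) (m : M) (o : Option W) : Prop :=
  GSCand R m o ∧ ∀ o', GSCand R m o' → mkt.mRank m o' ≤ mkt.mRank m o

def GSGood {M W : Type*} (mkt : Market M W) (R : Set (M × W)) : Prop :=
  ∀ m w, (m, w) ∈ R →
    (∀ μ : Matching M W, mkt.Stable μ → μ.mu m ≠ some w) ∧
    (mkt.wRank w (some m) < mkt.wRank w none ∨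
      ∃ m', GSTop mkt R m' (some w) ∧ mkt.wRank w (some m) < mkt.wRank w (some m'))

theorem GSTop.insert {M W : Type*} {mkt : Market M W} {R : Set (M × W)} {m m1 : M} {w w1 : W}
    (h : GSTop mkt R m1 (some w1)) (hne : (m1, w1) ≠ (m, w)) :
    GSTop mkt (insert (m, w) R) m1 (some w1) := by
  refine ⟨?_, ?_⟩
  · intro w2 h2
    cases h2
    intro hm
    rcases hm with hm | hm
    · exact hne hm
    · exact h.1 _ rfl hm
  · intro o' ho'
    exact h.2 o' (fun w2 h2 hm => ho' w2 h2 (Or.inr hm))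

theorem GSGood.insert {M W : Type*} {mkt : Market M W} {R : Set (M × W)} {m : M} {w : W}
    (hR : GSGood mkt R)
    (h1 : ∀ μ : Matching M W, mkt.Stable μ → μ.mu m ≠ some w)
    (h2 : mkt.wRank w (some m) < mkt.wRank w none ∨
      ∃ m', GSTop mkt R m' (some w) ∧ mkt.wRank w (some m) < mkt.wRank w (some m')) :
    GSGood mkt (insert (m, w) R) := by
  have key : mkt.wRank w (some m) < mkt.wRank w none ∨
      ∃ m', GSTop mkt (Insert.insert (m, w) R) m' (some w) ∧
        mkt.wRank w (some m) < mkt.wRank w (some m') := by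
    rcases h2 with h2 | ⟨m', ht, hlt⟩
    · exact Or.inl h2
    · refine Or.inr ⟨m', ht.insert ?_, hlt⟩
      rintro h
      cases h
      exact lt_irrefl _ hlt
  intro m1 w1 hm
  rcases hm with hm | hm
  · cases hm
    exact ⟨h1, key⟩
  · obtain ⟨ha, hb⟩ := hR m1 w1 hm
    refine ⟨ha, ?_⟩
    rcases hb with hb | ⟨m', ht, hlt⟩
    · exact Or.inl hb
    · by_cases he : (m', w1) = (m, w)
      · cases he
        rcases key with k | ⟨m2, k1, k2⟩
        · exact Or.inl (hlt.trans k)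
        · exact Or.inr ⟨m2, k1, hlt.trans k2⟩
      · exact Or.inr ⟨m', ht.insert he, hlt⟩

/-- In every matching market there exists a man-optimal stable
matching: a stable matching `μ0` such that for every stable matching `μ` and
every man `m`, `μ0(m) ⪰_m μ(m)`. -/
theorem exists_man_optimal_stable_matching {M W : Type*} [Fintype M] [Fintype W]
    (mkt : Market M W) :
    ∃ μ0 : Matching M W, mkt.Stable μ0 ∧
      ∀ μ : Matching M W, mkt.Stable μ →
        ∀ m : M, mkt.mRank m (μ.mu m) ≤ mkt.mRank m (μ0.mu m) := by
  classical
  obtain ⟨R, hR, hmax⟩ : ∃ R : Set (M × W), GSGood mkt R ∧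
      ∀ R', GSGood mkt R' → R ⊆ R' → R' ⊆ R := by
    have hfin : {R : Set (M × W) | GSGood mkt R}.Finite := Set.toFinite _
    obtain ⟨R, hR⟩ := hfin.exists_maximal ⟨∅, fun m w h => absurd h (Set.notMem_empty _)⟩
    exact ⟨R, hR.1, fun R' h1 h2 => hR.2 h1 h2⟩
  have hex : ∀ m, ∃ o, GSTop mkt R m o := by
    intro m
    have hfin : {o : Option W | GSCand R m o}.Finite := Set.toFinite _
    obtain ⟨o, ho, hle⟩ := Set.exists_max_image _ (mkt.mRank m) hfin
      ⟨none, fun w h => by cases h⟩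
    exact ⟨o, ho, hle⟩
  choose p hp using hex
  have hadd : ∀ m w, p m = some w →
      (∀ μ : Matching M W, mkt.Stable μ → μ.mu m ≠ some w) →
      (mkt.wRank w (some m) < mkt.wRank w none ∨
      ∃ m', GSTop mkt R m' (some w) ∧ mkt.wRank w (some m) < mkt.wRank w (some m')) → False := by
    intro m w hpm h1 h2
    exact (hp m).1 w hpm
      (hmax _ (hR.insert h1 h2) (Set.subset_insert _ _) (Set.mem_insert _ _))
  have hopt : ∀ μ : Matching M W, mkt.Stable μ →
      ∀ m : M, mkt.mRank m (μ.mu m) ≤ mkt.mRank m (p m) := by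
    intro μ hμ m
    exact (hp m).2 _ (fun w hw hm => (hR m w hm).1 μ hμ hw)
  have hacc : ∀ m w, p m = some w → mkt.wRank w none < mkt.wRank w (some m) := by
    intro m w hpm
    by_contra hcon
    have hne : mkt.wRank w (some m) ≠ mkt.wRank w none := fun h => by
      cases mkt.wRank_inj w h
    have hlt : mkt.wRank w (some m) < mkt.wRank w none := by omega
    refine hadd m w hpm (fun μ hμ he => ?_) (Or.inl hlt)
    have := hμ.1.2 w m ((μ.consistent m w).1 he)
    omega
  have hinj0 : ∀ m m' w, p m = some w → p m' = some w →
      ¬ mkt.wRank w (some m) < mkt.wRank w (some m') := by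
    intro m m' w h h' hlt
    refine hadd m w h (fun μ hμ he => ?_) (Or.inr ⟨m', h' ▸ hp m', hlt⟩)
    have hn := (μ.consistent m w).1 he
    have hne : μ.mu m' ≠ some w := by
      intro h2
      have h3 := (μ.consistent m' w).1 h2
      rw [hn] at h3
      cases h3
      exact lt_irrefl _ hlt
    refine hμ.2 m' w ⟨hne, ?_, by rw [hn]; exact hlt⟩
    have hle := hopt μ hμ m'
    rw [h'] at hle
    exact lt_of_le_of_ne hle (fun h4 => hne (mkt.mRank_inj m' h4))
  have hinj : ∀ m m' w, p m = some w → p m' = some w → m = m' := by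
    intro m m' w h h'
    have a := hinj0 m m' w h h'
    have b := hinj0 m' m w h' h
    exact Option.some.inj (mkt.wRank_inj w (by omega))
  let μ0 : Matching M W :=
    { mu := p
      nu := fun w => if h : ∃ m, p m = some w then some h.choose else none
      consistent := by
        intro m w
        constructor
        · intro h
          have hx : ∃ m, p m = some w := ⟨m, h⟩
          rw [dif_pos hx, hinj _ _ w hx.choose_spec h]
        · intro h
          split_ifs at h with hx
          rw [← Option.some.inj h]
          exact hx.choose_spec }
  refine ⟨μ0, ⟨⟨?_, ?_⟩, ?_⟩, hopt⟩
  · intro m w h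
    have hle := (hp m).2 none (fun w h => by cases h)
    have h' : p m = some w := h
    rw [h'] at hle
    exact lt_of_le_of_ne hle (fun h4 => by cases mkt.mRank_inj m h4)
  · intro w m h
    exact hacc m w ((μ0.consistent m w).2 h)
  · rintro m w ⟨_, h1, h2⟩
    have hmR : (m, w) ∈ R := by
      by_contra hm
      have := (hp m).2 (some w) (fun w' h' => by cases h'; exact hm)
      exact absurd h1 (not_lt.2 this)
    rcases (hR m w hmR).2 with h3 | ⟨m', ht, h3⟩
    · rcases hn : μ0.nu w with _ | m'
      · rw [hn] at h2; omega
      · have := hacc m' w ((μ0.consistent m' w).2 hn)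
        rw [hn] at h2; omega
    · have h4 : p m' = some w :=
        mkt.mRank_inj m' (le_antisymm (ht.2 _ (hp m').1) ((hp m').2 _ ht.1))
      have h5 := (μ0.consistent m' w).1 h4
      rw [h5] at h2; omega
end

section
/- The man-optimal stable matching is woman-pessimal: if μ0 is a stable matching such that every man m has μ0(m) ⪰_m μ(m) for every stable matching μ, then for every stable matching μ and every woman w, μ(w) ⪰_w μ0(w). -/
variable {M W : Type*}

/-- The man-optimal stable matching is woman-pessimal. -/
theorem man_optimal_is_woman_pessimal {M W : Type*} [Fintype M] [Fintype W]
    (mkt : Market M W) (μ0 : Matching M W) (h0 : mkt.Stable μ0)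
    (hopt : ∀ μ : Matching M W, mkt.Stable μ →
      ∀ m : M, mkt.mRank m (μ.mu m) ≤ mkt.mRank m (μ0.mu m)) :
    ∀ μ : Matching M W, mkt.Stable μ →
      ∀ w : W, mkt.wRank w (μ0.nu w) ≤ mkt.wRank w (μ.nu w) := by
  intro μ hμ w
  by_contra hlt
  rw [not_le] at hlt
  cases hw : μ0.nu w with
  | none =>
    rw [hw] at hlt
    cases hv : μ.nu w with
    | none => rw [hv] at hlt; exact lt_irrefl _ hlt
    | some m =>
      have h := hμ.1.2 w m hv
      rw [hv] at hlt
      exact lt_asymm h hlt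
  | some m =>
    rw [hw] at hlt
    have hm : μ0.mu m = some w := (μ0.consistent m w).2 hw
    have hne : μ.mu m ≠ some w := by
      intro h
      rw [(μ.consistent m w).1 h] at hlt
      exact lt_irrefl _ hlt
    have hle := hopt μ hμ m
    rw [hm] at hle
    exact hμ.2 m w ⟨hne, lt_of_le_of_ne hle (fun h => hne (mkt.mRank_inj m h)), hlt⟩
end

section
/- Rural hospital theorem (one-to-one case): for any two stable matchings μ and μ' of the same matching market, every agent (man or woman) is unmatched in μ if and only if they are unmatched in μ'. -/
variable {M W : Type*}

theorem rural_aux {M W : Type*} [Fintype M] [Fintype W]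
    (mkt : Market M W) (μ μ' : Matching M W)
    (h : mkt.Stable μ) (h' : mkt.Stable μ') :
    (∀ m : M, μ.mu m = none → μ'.mu m = none) ∧
    (∀ w : W, μ'.nu w = none → μ.nu w = none) := by
  classical
  obtain ⟨⟨hm, hw⟩, hb⟩ := h
  obtain ⟨⟨hm', hw'⟩, hb'⟩ := h'
  let A := {m : M // mkt.mRank m (μ.mu m) < mkt.mRank m (μ'.mu m)}
  let B := {w : W // mkt.wRank w (μ'.nu w) < mkt.wRank w (μ.nu w)}
  have hf : ∀ a : A, ∃ b : B, μ'.mu a.1 = some b.1 := by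
    rintro ⟨m, ha⟩
    cases e : μ'.mu m with
    | none =>
      rw [e] at ha
      cases e2 : μ.mu m with
      | none => rw [e2] at ha; omega
      | some w => have := hm m w e2; rw [e2] at ha; omega
    | some w =>
      rw [e] at ha
      have hne : μ.mu m ≠ some w := fun e2 => by rw [e2] at ha; omega
      have h1 : ¬ mkt.wRank w (μ.nu w) < mkt.wRank w (some m) := fun h2 => hb m w ⟨hne, ha, h2⟩
      have h3 : mkt.wRank w (μ.nu w) ≠ mkt.wRank w (some m) := fun h2 =>
        hne ((μ.consistent m w).2 (mkt.wRank_inj w h2))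
      refine ⟨⟨w, ?_⟩, rfl⟩
      rw [(μ'.consistent m w).1 e]
      omega
  have hg : ∀ b : B, ∃ a : A, μ.nu b.1 = some a.1 := by
    rintro ⟨w, ha⟩
    cases e : μ.nu w with
    | none =>
      rw [e] at ha
      cases e2 : μ'.nu w with
      | none => rw [e2] at ha; omega
      | some m => have := hw' w m e2; rw [e2] at ha; omega
    | some m =>
      rw [e] at ha
      have hne : μ'.mu m ≠ some w := fun e2 => by
        rw [(μ'.consistent m w).1 e2] at ha; omega
      have h1 : ¬ mkt.mRank m (μ'.mu m) < mkt.mRank m (some w) := fun h2 => hb' m w ⟨hne, h2, ha⟩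
      have h3 : mkt.mRank m (μ'.mu m) ≠ mkt.mRank m (some w) := fun h2 =>
        hne (mkt.mRank_inj m h2)
      refine ⟨⟨m, ?_⟩, rfl⟩
      rw [(μ.consistent m w).2 e]
      omega
  choose f hf using hf
  choose g hg using hg
  have fi : Function.Injective f := by
    intro a b hab
    have h1 := (μ'.consistent _ _).1 (hf a)
    have h2 := (μ'.consistent _ _).1 (hf b)
    rw [hab, h2] at h1
    exact Subtype.ext (Option.some.inj h1).symm
  have gi : Function.Injective g := by
    intro a b hab
    have h1 := (μ.consistent _ _).2 (hg a)
    have h2 := (μ.consistent _ _).2 (hg b)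
    rw [hab, h2] at h1
    exact Subtype.ext (Option.some.inj h1).symm
  have gs : Function.Surjective g :=
    (Finite.injective_iff_surjective.1 (gi.comp fi)).of_comp
  have fs : Function.Surjective f :=
    (Finite.injective_iff_surjective.1 (fi.comp gi)).of_comp
  constructor
  · intro m e
    cases e2 : μ'.mu m with
    | none => rfl
    | some w =>
      exfalso
      obtain ⟨b, hbb⟩ := gs ⟨m, by rw [e, e2]; exact hm' m w e2⟩
      have h1 := (μ.consistent _ _).2 (hg b)
      rw [hbb] at h1
      simp [e] at h1
  · intro w e
    cases e2 : μ.nu w with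
    | none => rfl
    | some m =>
      exfalso
      obtain ⟨b, hbb⟩ := fs ⟨w, by rw [e, e2]; exact hw w m e2⟩
      have h1 := (μ'.consistent _ _).1 (hf b)
      rw [hbb] at h1
      simp [e] at h1

/-- Rural hospital theorem (one-to-one case): every agent is
unmatched in one stable matching iff unmatched in any other. -/
theorem rural_hospital {M W : Type*} [Fintype M] [Fintype W]
    (mkt : Market M W) (μ μ' : Matching M W)
    (h : mkt.Stable μ) (h' : mkt.Stable μ') :
    (∀ m : M, μ.mu m = none ↔ μ'.mu m = none) ∧
    (∀ w : W, μ.nu w = none ↔ μ'.nu w = none) := by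
  have h1 := rural_aux mkt μ μ' h h'
  have h2 := rural_aux mkt μ' μ h' h
  exact ⟨fun m => ⟨h1.1 m, h2.1 m⟩, fun w => ⟨h2.2 w, h1.2 w⟩⟩
end

section
/- Let μ and μ' be stable matchings of the same matching market, let m be a man and w a woman with μ(m) = w and μ'(m) ≠ w. Then μ'(m) ≻_m w if and only if μ'(w) ≺_w m. -/
variable {M W : Type*}

/-- If `μ(m) = w` but `μ'(m) ≠ w` for stable `μ, μ'`, then
`μ'(m) ≻_m w ↔ μ'(w) ≺_w m`. -/
theorem one_up_one_down {M W : Type*} [Fintype M] [Fintype W]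
    (mkt : Market M W) (μ μ' : Matching M W)
    (h : mkt.Stable μ) (h' : mkt.Stable μ')
    (m : M) (w : W) (hmw : μ.mu m = some w) (hne : μ'.mu m ≠ some w) :
    mkt.mRank m (some w) < mkt.mRank m (μ'.mu m) ↔
      mkt.wRank w (μ'.nu w) < mkt.wRank w (some m) := by
  constructor
  · intro hlt
    have hA : ∀ a : {a : M // mkt.mRank a (μ.mu a) < mkt.mRank a (μ'.mu a)},
        ∃ b : {b : W // mkt.wRank b (μ'.nu b) < mkt.wRank b (μ.nu b)},
          μ'.mu a.1 = some b.1 := by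
      rintro ⟨a, ha⟩
      cases hb : μ'.mu a with
      | none =>
        rw [hb] at ha
        cases hc : μ.mu a with
        | none => rw [hc] at ha; exact absurd ha (lt_irrefl _)
        | some c => rw [hc] at ha; exact absurd (h.1.1 a c hc) (not_lt.mpr ha.le)
      | some b =>
        rw [hb] at ha
        have hn : μ.mu a ≠ some b := by
          intro e; rw [e] at ha; exact lt_irrefl _ ha
        have hb' := (μ'.consistent a b).1 hb
        refine ⟨⟨b, ?_⟩, rfl⟩
        rw [hb']
        by_contra hcon
        refine h.2 a b ⟨hn, ha, lt_of_le_of_ne (not_lt.mp hcon) ?_⟩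
        intro e
        exact hn ((μ.consistent a b).2 (mkt.wRank_inj b e))
    have hB : ∀ b : {b : W // mkt.wRank b (μ'.nu b) < mkt.wRank b (μ.nu b)},
        ∃ a : {a : M // mkt.mRank a (μ.mu a) < mkt.mRank a (μ'.mu a)},
          μ.nu b.1 = some a.1 := by
      rintro ⟨b, hb⟩
      cases ha : μ.nu b with
      | none =>
        rw [ha] at hb
        cases hc : μ'.nu b with
        | none => rw [hc] at hb; exact absurd hb (lt_irrefl _)
        | some c => rw [hc] at hb; exact absurd (h'.1.2 b c hc) (not_lt.mpr hb.le)
      | some a =>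
        rw [ha] at hb
        have hn : μ'.mu a ≠ some b := by
          intro e; rw [(μ'.consistent a b).1 e] at hb; exact lt_irrefl _ hb
        have ha' := (μ.consistent a b).2 ha
        refine ⟨⟨a, ?_⟩, rfl⟩
        rw [ha']
        by_contra hcon
        refine h'.2 a b ⟨hn, lt_of_le_of_ne (not_lt.mp hcon) ?_, hb⟩
        intro e
        exact hn (mkt.mRank_inj a e)
    choose f hf using hA
    choose g hg using hB
    have hfi : Function.Injective f := by
      intro x y e
      have h1 := (μ'.consistent _ _).1 (hf x)
      have h2 := (μ'.consistent _ _).1 (hf y)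
      rw [e, h2] at h1
      exact Subtype.ext (Option.some.inj h1).symm
    have hgi : Function.Injective g := by
      intro x y e
      have h1 := (μ.consistent _ _).2 (hg x)
      have h2 := (μ.consistent _ _).2 (hg y)
      rw [e, h2] at h1
      exact Subtype.ext (Option.some.inj h1).symm
    have hs := Finite.surjective_of_injective (hgi.comp hfi)
    obtain ⟨x, hx⟩ := hs ⟨m, by rw [hmw]; exact hlt⟩
    have h1 := hg (f x)
    have hx' : (g (f x)).1 = m := congrArg Subtype.val hx
    rw [hx'] at h1
    have h2 := (μ.consistent _ _).2 h1
    rw [hmw] at h2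
    have h3 := (f x).2
    rw [h1, ← Option.some.inj h2] at h3
    exact h3
  · intro hlt
    by_contra hcon
    refine h'.2 m w ⟨hne, lt_of_le_of_ne (not_lt.mp hcon) ?_, hlt⟩
    intro e
    exact hne (mkt.mRank_inj m e)
end

section
/- Let μ and μ' be stable matchings of the same matching market. Then every man weakly prefers his partner in μ over his partner in μ' (μ(m) ⪰_m μ'(m) for all m ∈ M) if and only if every woman weakly prefers her partner in μ' over her partner in μ (μ'(w) ⪰_w μ(w) for all w ∈ W). -/
variable {M W : Type*}

/-- every man weakly prefers `μ` to `μ'` iff every woman weakly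
prefers `μ'` to `μ`. -/
theorem men_prefer_iff_women_oppose {M W : Type*} [Fintype M] [Fintype W]
    (mkt : Market M W) (μ μ' : Matching M W)
    (h : mkt.Stable μ) (h' : mkt.Stable μ') :
    (∀ m : M, mkt.mRank m (μ'.mu m) ≤ mkt.mRank m (μ.mu m)) ↔
      (∀ w : W, mkt.wRank w (μ.nu w) ≤ mkt.wRank w (μ'.nu w)) := by
  constructor
  · intro hm w
    by_contra hlt
    push Not at hlt
    cases hw : μ.nu w with
    | none =>
      rw [hw] at hlt
      cases hw' : μ'.nu w with
      | none => rw [hw'] at hlt; exact lt_irrefl _ hlt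
      | some m =>
        have := h'.1.2 w m hw'
        rw [hw'] at hlt
        exact lt_asymm this hlt
    | some m =>
      have hmw := (μ.consistent m w).2 hw
      have hne : μ'.mu m ≠ some w := by
        intro e
        rw [(μ'.consistent m w).1 e, hw] at hlt
        exact lt_irrefl _ hlt
      have hle := hm m
      rw [hmw] at hle
      rw [hw] at hlt
      exact h'.2 m w ⟨hne, lt_of_le_of_ne hle (fun e => hne (mkt.mRank_inj m e)), hlt⟩
  · intro hw m
    by_contra hlt
    push Not at hlt
    cases hm : μ'.mu m with
    | none =>
      rw [hm] at hlt
      cases hm' : μ.mu m with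
      | none => rw [hm'] at hlt; exact lt_irrefl _ hlt
      | some w =>
        have := h.1.1 m w hm'
        rw [hm'] at hlt
        exact lt_asymm this hlt
    | some w =>
      have hwm := (μ'.consistent m w).1 hm
      have hne : μ.mu m ≠ some w := by
        intro e
        rw [e, hm] at hlt
        exact lt_irrefl _ hlt
      have hle := hw w
      rw [hwm] at hle
      rw [hm] at hlt
      exact h.2 m w ⟨hne, hlt, lt_of_le_of_ne hle
        (fun e => hne ((μ.consistent m w).2 (mkt.wRank_inj w e)))⟩
end

section
/- Let μ and μ' be stable matchings of the same matching market. Then the assignment μ∨μ' that gives each woman w the ≻_w-more-preferred of μ(w) and μ'(w) is a well-defined matching (in particular, each man receives under it the ≻_m-less-preferred of μ(m) and μ'(m)), and μ∨μ' is stable. -/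
variable {M W : Type*}

theorem join_aux {M W : Type*} [Fintype M] [Fintype W]
    (mkt : Market M W) (μ μ' : Matching M W)
    (h : mkt.Stable μ) (h' : mkt.Stable μ') :
    (∀ m, mkt.mRank m (μ'.mu m) < mkt.mRank m (μ.mu m) →
      ∃ w, μ'.mu m = some w ∧ mkt.wRank w (μ.nu w) < mkt.wRank w (μ'.nu w)) ∧
    (∀ w, mkt.wRank w (μ.nu w) < mkt.wRank w (μ'.nu w) →
      ∃ m, μ'.nu w = some m ∧ mkt.mRank m (μ'.mu m) < mkt.mRank m (μ.mu m)) := by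
  have h1 : ∀ a : {m // mkt.mRank m (μ'.mu m) < mkt.mRank m (μ.mu m)},
      ∃ b : {w // mkt.wRank w (μ.nu w) < mkt.wRank w (μ'.nu w)},
        μ.mu a.1 = some b.1 := by
    rintro ⟨m, hm⟩
    cases hw : μ.mu m with
    | none =>
      exfalso
      rw [hw] at hm
      cases hw' : μ'.mu m with
      | none => rw [hw'] at hm; omega
      | some w => have := h'.1.1 m w hw'; rw [hw'] at hm; omega
    | some w =>
      rw [hw] at hm
      have hn := (μ.consistent m w).1 hw
      have hne : μ'.mu m ≠ some w := by intro e; rw [e] at hm; omega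
      have hnb := h'.2 m w
      refine ⟨⟨w, ?_⟩, rfl⟩
      by_contra hc
      rw [hn] at hc
      refine hnb ⟨hne, hm, lt_of_le_of_ne (not_lt.1 hc) ?_⟩
      intro e
      exact hne ((μ'.consistent m w).2 (mkt.wRank_inj w e))
  have h2 : ∀ b : {w // mkt.wRank w (μ.nu w) < mkt.wRank w (μ'.nu w)},
      ∃ a : {m // mkt.mRank m (μ'.mu m) < mkt.mRank m (μ.mu m)},
        μ'.nu b.1 = some a.1 := by
    rintro ⟨w, hw⟩
    cases hm : μ'.nu w with
    | none =>
      exfalso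
      rw [hm] at hw
      cases hm' : μ.nu w with
      | none => rw [hm'] at hw; omega
      | some m => have := h.1.2 w m hm'; rw [hm'] at hw; omega
    | some m =>
      rw [hm] at hw
      have hn := (μ'.consistent m w).2 hm
      have hne : μ.nu w ≠ some m := by intro e; rw [e] at hw; omega
      have hne2 : μ.mu m ≠ some w := fun e => hne ((μ.consistent m w).1 e)
      refine ⟨⟨m, ?_⟩, rfl⟩
      by_contra hc
      rw [hn] at hc
      exact h.2 m w ⟨hne2, lt_of_le_of_ne (not_lt.1 hc)
        (fun e => hne2 (mkt.mRank_inj m e)), hw⟩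
  choose f hf using h1
  choose g hg using h2
  have fi : Function.Injective f := by
    intro a b e
    have ha := (μ.consistent _ _).1 (hf a)
    have hb := (μ.consistent _ _).1 (hf b)
    rw [e, hb] at ha
    exact Subtype.ext (Option.some.inj ha).symm
  have gi : Function.Injective g := by
    intro a b e
    have ha := (μ'.consistent _ _).2 (hg a)
    have hb := (μ'.consistent _ _).2 (hg b)
    rw [e, hb] at ha
    exact Subtype.ext (Option.some.inj ha).symm
  have gs : Function.Surjective g :=
    (Finite.surjective_of_injective (gi.comp fi)).of_comp
  refine ⟨fun m hm => ?_, fun w hw => ⟨_, hg ⟨w, hw⟩, (g ⟨w, hw⟩).2⟩⟩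
  obtain ⟨b, hb⟩ := gs ⟨m, hm⟩
  have := (μ'.consistent _ _).2 (hg b)
  rw [hb] at this
  exact ⟨b.1, this, b.2⟩

/-- for stable `μ, μ'`, the assignment giving each woman the
more preferred of `μ(w)` and `μ'(w)` is a well-defined matching (each man
receiving the less preferred of `μ(m)` and `μ'(m)`), and it is stable. -/
theorem join_is_stable_matching {M W : Type*} [Fintype M] [Fintype W]
    (mkt : Market M W) (μ μ' : Matching M W)
    (h : mkt.Stable μ) (h' : mkt.Stable μ') :
    ∃ σ : Matching M W,
      (∀ w : W, σ.nu w =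
        if mkt.wRank w (μ'.nu w) ≤ mkt.wRank w (μ.nu w) then μ.nu w else μ'.nu w) ∧
      (∀ m : M, σ.mu m =
        if mkt.mRank m (μ.mu m) ≤ mkt.mRank m (μ'.mu m) then μ.mu m else μ'.mu m) ∧
      mkt.Stable σ := by
  obtain ⟨a1, a2⟩ := join_aux mkt μ μ' h h'
  obtain ⟨b1, b2⟩ := join_aux mkt μ' μ h' h
  refine ⟨⟨fun m => if mkt.mRank m (μ.mu m) ≤ mkt.mRank m (μ'.mu m) then μ.mu m else μ'.mu m,
    fun w => if mkt.wRank w (μ'.nu w) ≤ mkt.wRank w (μ.nu w) then μ.nu w else μ'.nu w, ?_⟩,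
    fun _ => rfl, fun _ => rfl, ⟨?_, ?_⟩, ?_⟩
  · intro m w
    have c := μ.consistent m w
    have c' := μ'.consistent m w
    constructor
    · intro e
      rcases lt_trichotomy (mkt.mRank m (μ.mu m)) (mkt.mRank m (μ'.mu m)) with hl | hl | hl
      · rw [if_pos hl.le] at e
        obtain ⟨w', e', hw⟩ := b1 m hl
        obtain rfl : w = w' := Option.some.inj (e.symm.trans e')
        rw [if_pos hw.le]; exact c.1 e
      · rw [if_pos hl.le] at e
        have e2 := mkt.mRank_inj m hl
        split_ifs
        · exact c.1 e
        · exact c'.1 (e2 ▸ e)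
      · rw [if_neg (not_le.2 hl)] at e
        obtain ⟨w', e', hw⟩ := a1 m hl
        obtain rfl : w = w' := Option.some.inj (e.symm.trans e')
        rw [if_neg (not_le.2 hw)]; exact c'.1 e
    · intro e
      rcases lt_trichotomy (mkt.wRank w (μ'.nu w)) (mkt.wRank w (μ.nu w)) with hl | hl | hl
      · rw [if_pos hl.le] at e
        obtain ⟨m', e', hm⟩ := b2 w hl
        obtain rfl : m = m' := Option.some.inj (e.symm.trans e')
        rw [if_pos hm.le]; exact c.2 e
      · rw [if_pos hl.le] at e
        have e2 := mkt.wRank_inj w hl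
        split_ifs
        · exact c.2 e
        · exact c'.2 (e2.trans e)
      · rw [if_neg (not_le.2 hl)] at e
        obtain ⟨m', e', hm⟩ := a2 w hl
        obtain rfl : m = m' := Option.some.inj (e.symm.trans e')
        rw [if_neg (not_le.2 hm)]; exact c'.2 e
  · intro m w e
    dsimp only at e
    split_ifs at e
    · exact h.1.1 m w e
    · exact h'.1.1 m w e
  · intro w m e
    dsimp only at e
    split_ifs at e
    · exact h.1.2 w m e
    · exact h'.1.2 w m e
  · rintro m w ⟨hne, hm, hw⟩
    dsimp only at hne hm hw
    have hw1 : mkt.wRank w (μ.nu w) < mkt.wRank w (some m) := by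
      split_ifs at hw <;> omega
    have hw2 : mkt.wRank w (μ'.nu w) < mkt.wRank w (some m) := by
      split_ifs at hw <;> omega
    split_ifs at hne hm
    · exact h.2 m w ⟨hne, hm, hw1⟩
    · exact h'.2 m w ⟨hne, hm, hw2⟩
end

section
/- Let μ and μ' be stable matchings of the same matching market. Then the assignment μ∧μ' that gives each woman w the ≻_w-less-preferred of μ(w) and μ'(w) is a well-defined matching (in particular, each man receives under it the ≻_m-more-preferred of μ(m) and μ'(m)), and μ∧μ' is stable. -/
variable {M W : Type*}

theorem meet_aux {M W : Type*} [Fintype M] [Fintype W]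
    (mkt : Market M W) (μ μ' : Matching M W)
    (h : mkt.Stable μ) (h' : mkt.Stable μ') (w : W) (m : M) (hw : μ.nu w = some m)
    (hlt : mkt.wRank w (μ.nu w) < mkt.wRank w (μ'.nu w)) :
    mkt.mRank m (μ'.mu m) < mkt.mRank m (μ.mu m) := by
  obtain ⟨⟨hm, hwo⟩, hb⟩ := h
  obtain ⟨⟨hm', hwo'⟩, hb'⟩ := h'
  have ir : ∀ m, mkt.mRank m none ≤ mkt.mRank m (μ'.mu m) := by
    intro m
    cases e : μ'.mu m with
    | none => exact le_rfl
    | some w => exact (hm' m w e).le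
  have irw : ∀ w, mkt.wRank w none ≤ mkt.wRank w (μ.nu w) := by
    intro w
    cases e : μ.nu w with
    | none => exact le_rfl
    | some m => exact (hwo w m e).le
  have F : ∀ a : {m // mkt.mRank m (μ'.mu m) < mkt.mRank m (μ.mu m)},
      ∃ b : {w // mkt.wRank w (μ.nu w) < mkt.wRank w (μ'.nu w)}, μ.mu a.1 = some b.1 := by
    rintro ⟨a, ha⟩
    cases e : μ.mu a with
    | none => rw [e] at ha; exact absurd ha (not_lt.mpr (ir a))
    | some x =>
      refine ⟨⟨x, ?_⟩, rfl⟩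
      rw [e] at ha
      have hne : μ'.mu a ≠ some x := by intro h; rw [h] at ha; exact lt_irrefl _ ha
      have ex := (μ.consistent a x).1 e
      rw [ex]
      have h1 : ¬ mkt.wRank x (μ'.nu x) < mkt.wRank x (some a) :=
        fun h => hb' a x ⟨hne, ha, h⟩
      refine lt_of_le_of_ne (not_lt.mp h1) ?_
      intro h
      exact hne ((μ'.consistent a x).2 (mkt.wRank_inj x h).symm)
  have G : ∀ b : {w // mkt.wRank w (μ.nu w) < mkt.wRank w (μ'.nu w)},
      ∃ a : {m // mkt.mRank m (μ'.mu m) < mkt.mRank m (μ.mu m)}, μ'.nu b.1 = some a.1 := by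
    rintro ⟨b, hbb⟩
    cases e : μ'.nu b with
    | none => rw [e] at hbb; exact absurd hbb (not_lt.mpr (irw b))
    | some x =>
      refine ⟨⟨x, ?_⟩, rfl⟩
      rw [e] at hbb
      have hne : μ.mu x ≠ some b := by
        intro h
        rw [(μ.consistent x b).1 h] at hbb; exact lt_irrefl _ hbb
      have ex := (μ'.consistent x b).2 e
      rw [ex]
      have h1 : ¬ mkt.mRank x (μ.mu x) < mkt.mRank x (some b) :=
        fun h => hb x b ⟨hne, h, hbb⟩
      refine lt_of_le_of_ne (not_lt.mp h1) ?_
      intro h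
      exact hne (mkt.mRank_inj x h).symm
  choose f hf using F
  choose g hg using G
  have fi : Function.Injective f := by
    intro a a' e
    have h1 := (μ.consistent _ _).1 (hf a)
    have h2 := (μ.consistent _ _).1 (hf a')
    rw [e, h2] at h1
    exact Subtype.ext (Option.some.inj h1).symm
  have gi : Function.Injective g := by
    intro a a' e
    have h1 := (μ'.consistent _ _).2 (hg a)
    have h2 := (μ'.consistent _ _).2 (hg a')
    rw [e, h2] at h1
    exact Subtype.ext (Option.some.inj h1).symm
  have hs := Finite.surjective_of_injective (fi.comp gi)
  obtain ⟨b, e⟩ := hs ⟨w, hlt⟩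
  have h1 := (μ.consistent _ _).1 (hf (g b))
  have e' : (f (g b)).1 = w := congrArg Subtype.val e
  rw [e', hw] at h1
  rw [Option.some.inj h1]
  exact (g b).2

theorem meet_aux2 {M W : Type*}
    (mkt : Market M W) (μ μ' : Matching M W)
    (h' : mkt.Stable μ') (w : W) (m : M) (hw : μ.mu m = some w)
    (hle : mkt.mRank m (μ'.mu m) ≤ mkt.mRank m (μ.mu m)) :
    mkt.wRank w (μ.nu w) ≤ mkt.wRank w (μ'.nu w) := by
  have e := (μ.consistent m w).1 hw
  rcases hle.lt_or_eq with hlt | heq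
  · rw [hw] at hlt
    rw [e]
    by_contra hc
    exact h'.2 m w ⟨fun h => by rw [h] at hlt; exact lt_irrefl _ hlt, hlt, not_le.mp hc⟩
  · have := mkt.mRank_inj m heq
    rw [hw] at this
    rw [e, (μ'.consistent m w).1 this]

/-- for stable `μ, μ'`, the assignment giving each woman the
less preferred of `μ(w)` and `μ'(w)` is a well-defined matching (each man
receiving the more preferred of `μ(m)` and `μ'(m)`), and it is stable. -/
theorem meet_is_stable_matching {M W : Type*} [Fintype M] [Fintype W]
    (mkt : Market M W) (μ μ' : Matching M W)
    (h : mkt.Stable μ) (h' : mkt.Stable μ') :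
    ∃ σ : Matching M W,
      (∀ w : W, σ.nu w =
        if mkt.wRank w (μ.nu w) ≤ mkt.wRank w (μ'.nu w) then μ.nu w else μ'.nu w) ∧
      (∀ m : M, σ.mu m =
        if mkt.mRank m (μ'.mu m) ≤ mkt.mRank m (μ.mu m) then μ.mu m else μ'.mu m) ∧
      mkt.Stable σ := by
  have key : ∀ m w,
      (if mkt.mRank m (μ'.mu m) ≤ mkt.mRank m (μ.mu m) then μ.mu m else μ'.mu m) = some w ↔
      (if mkt.wRank w (μ.nu w) ≤ mkt.wRank w (μ'.nu w) then μ.nu w else μ'.nu w) = some m := by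
    intro m w
    constructor
    · intro hh
      split_ifs at hh with h1
      · rw [if_pos (meet_aux2 mkt μ μ' h' w m hh h1)]
        exact (μ.consistent m w).1 hh
      · have h2 := meet_aux2 mkt μ' μ h w m hh (not_le.mp h1).le
        have h3 := (μ'.consistent m w).1 hh
        split_ifs with h4
        · rw [mkt.wRank_inj w (le_antisymm h4 h2), h3]
        · exact h3
    · intro hh
      split_ifs at hh with h1
      · have h3 := (μ.consistent m w).2 hh
        rcases h1.lt_or_eq with hlt | heq
        · rw [if_pos (meet_aux mkt μ μ' h h' w m hh hlt).le, h3]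
        · have h4 := mkt.wRank_inj w heq
          rw [hh] at h4
          rw [h3, (μ'.consistent m w).2 h4.symm, ite_self]
      · have h3 := (μ'.consistent m w).2 hh
        rw [if_neg (not_le.mpr (meet_aux mkt μ' μ h' h w m hh (not_le.mp h1))), h3]
  refine ⟨⟨_, _, key⟩, fun _ => rfl, fun _ => rfl, ⟨?_, ?_⟩, ?_⟩
  · intro m w hh
    dsimp only at hh
    split_ifs at hh
    · exact h.1.1 m w hh
    · exact h'.1.1 m w hh
  · intro w m hh
    dsimp only at hh
    split_ifs at hh
    · exact h.1.2 w m hh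
    · exact h'.1.2 w m hh
  · rintro m w ⟨_, h2, h3⟩
    dsimp only at h2 h3
    have a1 : mkt.mRank m (μ.mu m) < mkt.mRank m (some w) := by
      split_ifs at h2 <;> omega
    have a2 : mkt.mRank m (μ'.mu m) < mkt.mRank m (some w) := by
      split_ifs at h2 <;> omega
    split_ifs at h3
    · exact h.2 m w ⟨fun h => by rw [h] at a1; exact lt_irrefl _ a1, a1, h3⟩
    · exact h'.2 m w ⟨fun h => by rw [h] at a2; exact lt_irrefl _ a2, a2, h3⟩
end

section
/- The set of stable matchings of a matching market, ordered by woman-dominance, is a distributive lattice: the join of two stable matchings μ, μ' is the stable matching μ∨μ' giving each woman her more preferred of μ(w), μ'(w), the meet is the stable matching μ∧μ' giving each woman her less preferred of μ(w), μ'(w), and these operations satisfy μ1 ∧ (μ2 ∨ μ3) = (μ1 ∧ μ2) ∨ (μ1 ∧ μ3) and μ1 ∨ (μ2 ∧ μ3) = (μ1 ∨ μ2) ∧ (μ1 ∨ μ3). -/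
variable {M W : Type*}

theorem nu_pref_of {M W : Type*} (k : Market M W) {μ μ' : Matching M W}
    (h' : k.Stable μ') {m : M} {w : W} (hm : μ.nu w = some m)
    (hw : k.wRank w (μ'.nu w) < k.wRank w (μ.nu w)) :
    k.mRank m (some w) < k.mRank m (μ'.mu m) := by
  have hne : μ'.mu m ≠ some w := by
    intro h
    rw [μ'.consistent] at h
    rw [h, hm] at hw
    exact lt_irrefl _ hw
  by_contra hc
  rcases lt_or_eq_of_le (not_lt.mp hc) with h | h
  · exact h'.2 m w ⟨hne, h, by rwa [hm] at hw⟩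
  · exact hne (k.mRank_inj m h)

def Market.dual {M W : Type*} (k : Market M W) : Market W M :=
  ⟨k.wRank, k.mRank, k.wRank_inj, k.mRank_inj⟩

def Matching.dual {M W : Type*} (μ : Matching M W) : Matching W M :=
  ⟨μ.nu, μ.mu, fun w m => (μ.consistent m w).symm⟩

theorem stable_dual {M W : Type*} (k : Market M W) {μ : Matching M W}
    (h : k.Stable μ) : k.dual.Stable μ.dual :=
  ⟨⟨h.1.2, h.1.1⟩, fun w m hb =>
    h.2 m w ⟨fun e => hb.1 ((μ.consistent m w).1 e), hb.2.2, hb.2.1⟩⟩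

theorem none_le_nu {M W : Type*} (k : Market M W) {μ : Matching M W}
    (h : k.Stable μ) (w : W) : k.wRank w none ≤ k.wRank w (μ.nu w) := by
  cases e : μ.nu w with
  | none => exact le_rfl
  | some m => exact (h.1.2 w m e).le

theorem none_le_mu {M W : Type*} (k : Market M W) {μ : Matching M W}
    (h : k.Stable μ) (m : M) : k.mRank m none ≤ k.mRank m (μ.mu m) :=
  none_le_nu k.dual (stable_dual k h) m

theorem mu_pref_of {M W : Type*} (k : Market M W) {μ μ' : Matching M W}
    (h' : k.Stable μ') {m : M} {w : W} (hm : μ.mu m = some w)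
    (hw : k.mRank m (μ'.mu m) < k.mRank m (μ.mu m)) :
    k.wRank w (some m) < k.wRank w (μ'.nu w) :=
  nu_pref_of k.dual (μ := μ.dual) (stable_dual k h') hm hw

theorem nu_pref_of_mu {M W : Type*} [Fintype W] (k : Market M W) {μ μ' : Matching M W}
    (h : k.Stable μ) (h' : k.Stable μ') {m : M} {w : W} (hm : μ.mu m = some w)
    (hw : k.mRank m (μ.mu m) < k.mRank m (μ'.mu m)) :
    k.wRank w (μ'.nu w) < k.wRank w (μ.nu w) := by
  have key : ∀ a : {w : W // k.wRank w (μ'.nu w) < k.wRank w (μ.nu w)},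
      ∃ b : {w : W // k.wRank w (μ'.nu w) < k.wRank w (μ.nu w)},
      ∃ x, μ.nu a.1 = some x ∧ μ'.mu x = some b.1 := by
    rintro ⟨a, ha⟩
    cases e : μ.nu a with
    | none =>
      rw [e] at ha
      exact absurd (none_le_nu k h' a) (not_le.mpr ha)
    | some x =>
      have h1 := nu_pref_of k h' e ha
      have e2 := (μ.consistent x a).2 e
      cases e3 : μ'.mu x with
      | none =>
        rw [e3] at h1
        exact absurd (h.1.1 x a e2) (not_lt.mpr h1.le)
      | some b =>
        have h2 := mu_pref_of k h (μ := μ') e3 (by rw [e2]; exact h1)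
        have e4 := (μ'.consistent x b).1 e3
        exact ⟨⟨b, by rw [e4]; exact h2⟩, x, rfl, e3⟩
  choose f g hg hf using key
  have hinj : Function.Injective f := by
    intro a b hab
    have h1 := (μ'.consistent _ _).1 (hf a)
    have h2 := (μ'.consistent _ _).1 (hf b)
    rw [hab, h2] at h1
    have h3 : g b = g a := Option.some.inj h1
    have h4 := (μ.consistent _ _).2 (hg a)
    have h5 := (μ.consistent _ _).2 (hg b)
    rw [h3, h4] at h5
    exact Subtype.ext (Option.some.inj h5)
  have hsurj := Finite.surjective_of_injective hinj
  cases e : μ'.mu m with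
  | none =>
    rw [e] at hw
    exact absurd (none_le_mu k h m) (not_le.mpr hw)
  | some b =>
    have h2 := mu_pref_of k h (μ := μ') e hw
    have e4 := (μ'.consistent m b).1 e
    obtain ⟨a, ha⟩ := hsurj ⟨b, by rw [e4]; exact h2⟩
    have h1 := (μ'.consistent _ _).1 (hf a)
    rw [ha] at h1
    simp only [e4] at h1
    have h3 : m = g a := Option.some.inj h1
    have h4 := (μ.consistent _ _).2 (hg a)
    rw [← h3, hm] at h4
    have h5 : w = a.1 := Option.some.inj h4
    rw [h5]
    exact a.2

theorem exists_join {M W : Type*} [Fintype W] (k : Market M W) {μ μ' : Matching M W}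
    (h : k.Stable μ) (h' : k.Stable μ') :
    ∃ σ : Matching M W, k.IsJoin μ μ' σ ∧
      (∀ m, σ.mu m = if k.mRank m (μ.mu m) ≤ k.mRank m (μ'.mu m) then μ.mu m else μ'.mu m) ∧
      k.Stable σ := by
  have cons : ∀ m w,
      (if k.mRank m (μ.mu m) ≤ k.mRank m (μ'.mu m) then μ.mu m else μ'.mu m) = some w ↔
      (if k.wRank w (μ'.nu w) ≤ k.wRank w (μ.nu w) then μ.nu w else μ'.nu w) = some m := by
    intro m w
    constructor
    · split_ifs with h1 h2 h2 <;> intro e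
      · exact (μ.consistent m w).1 e
      · rcases lt_or_eq_of_le h1 with h3 | h3
        · exact absurd (nu_pref_of_mu k h h' e h3).le h2
        · have h4 := k.mRank_inj m h3
          rw [h4] at e
          exact (μ'.consistent m w).1 e
      · exact absurd (nu_pref_of_mu k h' h e (not_le.mp h1)) (not_lt.mpr h2)
      · exact (μ'.consistent m w).1 e
    · split_ifs with h1 h2 h2 <;> intro e
      · exact (μ.consistent m w).2 e
      · rcases lt_or_eq_of_le h1 with h3 | h3
        · have := nu_pref_of k h' e h3
          rw [← (μ.consistent m w).2 e] at this
          exact absurd this.le h2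
        · have h4 := k.wRank_inj w h3
          rw [← h4] at e
          exact (μ'.consistent m w).2 e
      · have := nu_pref_of k h e (not_le.mp h1)
        rw [← (μ'.consistent m w).2 e] at this
        exact absurd this (not_lt.mpr h2)
      · exact (μ'.consistent m w).2 e
  refine ⟨⟨_, _, cons⟩, fun w => rfl, fun m => rfl, ⟨⟨?_, ?_⟩, ?_⟩⟩
  · intro m w e
    dsimp only at e
    split_ifs at e
    · exact h.1.1 m w e
    · exact h'.1.1 m w e
  · intro w m e
    dsimp only at e
    split_ifs at e
    · exact h.1.2 w m e
    · exact h'.1.2 w m e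
  · rintro m w ⟨h0, h1, h2⟩
    dsimp only at h0 h1 h2
    have h3 : k.wRank w (μ.nu w) < k.wRank w (some m) ∧
        k.wRank w (μ'.nu w) < k.wRank w (some m) := by
      split_ifs at h2 with h4
      · exact ⟨h2, h4.trans_lt h2⟩
      · exact ⟨(not_le.mp h4).trans h2, h2⟩
    split_ifs at h0 h1
    · exact h.2 m w ⟨h0, h1, h3.1⟩
    · exact h'.2 m w ⟨h0, h1, h3.2⟩

theorem rank_join {M W : Type*} (k : Market M W) {μ μ' σ : Matching M W}
    (h : k.IsJoin μ μ' σ) (w : W) :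
    k.wRank w (σ.nu w) = max (k.wRank w (μ.nu w)) (k.wRank w (μ'.nu w)) := by
  rw [h w]
  split_ifs with h1
  · exact (max_eq_left h1).symm
  · exact (max_eq_right (not_le.mp h1).le).symm

theorem rank_meet {M W : Type*} (k : Market M W) {μ μ' σ : Matching M W}
    (h : k.IsMeet μ μ' σ) (w : W) :
    k.wRank w (σ.nu w) = min (k.wRank w (μ.nu w)) (k.wRank w (μ'.nu w)) := by
  rw [h w]
  split_ifs with h1
  · exact (min_eq_left h1).symm
  · exact (min_eq_right (not_le.mp h1).le).symm

theorem matching_eq {M W : Type*} (k : Market M W) {μ μ' : Matching M W}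
    (h : ∀ w, k.wRank w (μ.nu w) = k.wRank w (μ'.nu w)) : μ = μ' := by
  have hn : μ.nu = μ'.nu := funext fun w => k.wRank_inj w (h w)
  have hm : μ.mu = μ'.mu := by
    funext m
    apply Option.ext
    intro w
    have := μ.consistent m w
    rw [hn, ← μ'.consistent m w] at this
    exact this
  cases μ
  cases μ'
  simp only at hn hm
  subst hn hm
  rfl

/-- the stable matchings, ordered by woman-dominance, form a
distributive lattice: the join `μ∨μ'` (womanwise max) and meet `μ∧μ'`
(womanwise min) are stable, are respectively the least upper bound and the
greatest lower bound, and distribute over each other. -/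
theorem stable_matchings_distributive_lattice {M W : Type*} [Fintype M] [Fintype W]
    (mkt : Market M W) :
    (∀ μ μ' : Matching M W, mkt.Stable μ → mkt.Stable μ' →
      ∃ σ : Matching M W, mkt.IsJoin μ μ' σ ∧ mkt.Stable σ ∧
        mkt.Dom σ μ ∧ mkt.Dom σ μ' ∧
        ∀ τ : Matching M W, mkt.Stable τ → mkt.Dom τ μ → mkt.Dom τ μ' → mkt.Dom τ σ) ∧
    (∀ μ μ' : Matching M W, mkt.Stable μ → mkt.Stable μ' →
      ∃ σ : Matching M W, mkt.IsMeet μ μ' σ ∧ mkt.Stable σ ∧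
        mkt.Dom μ σ ∧ mkt.Dom μ' σ ∧
        ∀ τ : Matching M W, mkt.Stable τ → mkt.Dom μ τ → mkt.Dom μ' τ → mkt.Dom σ τ) ∧
    (∀ μ1 μ2 μ3 σ23 lhs τ12 τ13 rhs : Matching M W,
      mkt.Stable μ1 → mkt.Stable μ2 → mkt.Stable μ3 →
      mkt.IsJoin μ2 μ3 σ23 → mkt.IsMeet μ1 σ23 lhs →
      mkt.IsMeet μ1 μ2 τ12 → mkt.IsMeet μ1 μ3 τ13 → mkt.IsJoin τ12 τ13 rhs →
      lhs = rhs) ∧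
    (∀ μ1 μ2 μ3 σ23 lhs τ12 τ13 rhs : Matching M W,
      mkt.Stable μ1 → mkt.Stable μ2 → mkt.Stable μ3 →
      mkt.IsMeet μ2 μ3 σ23 → mkt.IsJoin μ1 σ23 lhs →
      mkt.IsJoin μ1 μ2 τ12 → mkt.IsJoin μ1 μ3 τ13 → mkt.IsMeet τ12 τ13 rhs →
      lhs = rhs) := by
  refine ⟨?_, ?_, ?_, ?_⟩
  · intro μ μ' h h'
    obtain ⟨σ, hj, -, hs⟩ := exists_join mkt h h'
    refine ⟨σ, hj, hs, ?_, ?_, ?_⟩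
    · intro w
      rw [rank_join mkt hj w]
      exact le_max_left _ _
    · intro w
      rw [rank_join mkt hj w]
      exact le_max_right _ _
    · intro τ _ h1 h2 w
      rw [rank_join mkt hj w]
      exact max_le (h1 w) (h2 w)
  · intro μ μ' h h'
    obtain ⟨σ, -, hj, hs⟩ := exists_join mkt.dual (stable_dual mkt h) (stable_dual mkt h')
    have hm : mkt.IsMeet μ μ' σ.dual := hj
    refine ⟨σ.dual, hm, stable_dual mkt.dual hs, ?_, ?_, ?_⟩
    · intro w
      rw [rank_meet mkt hm w]
      exact min_le_left _ _
    · intro w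
      rw [rank_meet mkt hm w]
      exact min_le_right _ _
    · intro τ _ h1 h2 w
      rw [rank_meet mkt hm w]
      exact le_min (h1 w) (h2 w)
  · intro μ1 μ2 μ3 σ23 lhs τ12 τ13 rhs _ _ _ h1 h2 h3 h4 h5
    apply matching_eq mkt
    intro w
    rw [rank_meet mkt h2, rank_join mkt h1, rank_join mkt h5, rank_meet mkt h3, rank_meet mkt h4]
    exact min_max_distrib_left _ _ _
  · intro μ1 μ2 μ3 σ23 lhs τ12 τ13 rhs _ _ _ h1 h2 h3 h4 h5
    apply matching_eq mkt
    intro w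
    rw [rank_join mkt h2, rank_meet mkt h1, rank_meet mkt h5, rank_join mkt h3, rank_join mkt h4]
    exact max_min_distrib_left _ _ _
end

section
/- Let μ0 be a stable matching and w a woman who has a stable partner she strictly prefers to μ0(w) (i.e., some stable matching μ* has μ*(w) ≻_w μ0(w)). Then there exists a stable matching μ' with μ' > μ0 in the woman-dominance order and μ'(w) ≻_w μ0(w). -/
variable {M W : Type*}

theorem cmu_step {M W : Type*} (mkt : Market M W) (a b : Matching M W)
    (ha : mkt.Stable a) (hb : mkt.Stable b) (w : W)
    (hw : mkt.wRank w (a.nu w) < mkt.wRank w (b.nu w)) :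
    ∃ m w', b.nu w = some m ∧ a.nu w' = some m ∧
      mkt.wRank w' (a.nu w') < mkt.wRank w' (b.nu w') := by
  have hane : mkt.wRank w none ≤ mkt.wRank w (a.nu w) := by
    cases h : a.nu w with
    | none => exact le_rfl
    | some m => exact (ha.1.2 w m h).le
  cases hbm : b.nu w with
  | none => rw [hbm] at hw; omega
  | some m =>
    rw [hbm] at hw
    have hbmu : b.mu m = some w := (b.consistent m w).2 hbm
    have hne : a.mu m ≠ some w := by
      intro h
      rw [(a.consistent m w).1 h] at hw
      exact lt_irrefl _ hw
    have h1 : mkt.mRank m (some w) < mkt.mRank m (a.mu m) := by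
      by_contra hcon
      have h2 : mkt.mRank m (a.mu m) ≠ mkt.mRank m (some w) :=
        fun h => hne (mkt.mRank_inj m h)
      exact ha.2 m w ⟨hne, by omega, hw⟩
    have h3 := hb.1.1 m w hbmu
    cases ham : a.mu m with
    | none => rw [ham] at h1; omega
    | some w' =>
      have hanu := (a.consistent m w').1 ham
      refine ⟨m, w', rfl, hanu, ?_⟩
      rw [ham] at h1
      have hne' : b.mu m ≠ some w' := by
        intro h
        rw [hbmu] at h
        rw [h] at h1
        exact lt_irrefl _ h1
      have hne2 : b.nu w' ≠ some m := fun h => hne' ((b.consistent m w').2 h)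
      by_contra hcon
      rw [hanu] at hcon
      have h2 : mkt.wRank w' (b.nu w') ≠ mkt.wRank w' (some m) :=
        fun h => hne2 (mkt.wRank_inj w' h)
      exact hb.2 m w' ⟨hne', by rw [hbmu]; exact h1, by omega⟩

theorem cmu_nu_inj {M W : Type*} (a : Matching M W) {w w' : W} {m : M}
    (h : a.nu w = some m) (h' : a.nu w' = some m) : w = w' := by
  have h1 := (a.consistent m w).2 h
  have h2 := (a.consistent m w').2 h'
  rw [h1] at h2
  exact Option.some.inj h2

theorem cmu_back {M W : Type*} [Fintype W] (mkt : Market M W) (a b : Matching M W)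
    (ha : mkt.Stable a) (hb : mkt.Stable b) (w : W) (m : M)
    (hw : mkt.wRank w (a.nu w) < mkt.wRank w (b.nu w)) (hm : a.nu w = some m) :
    ∃ w', b.nu w' = some m ∧ mkt.wRank w' (a.nu w') < mkt.wRank w' (b.nu w') := by
  choose f g h1 h2 h3 using cmu_step mkt a b ha hb
  let F : {w : W // mkt.wRank w (a.nu w) < mkt.wRank w (b.nu w)} →
      {w : W // mkt.wRank w (a.nu w) < mkt.wRank w (b.nu w)} :=
    fun x => ⟨g x.1 x.2, h3 x.1 x.2⟩
  have hF : Function.Injective F := by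
    intro x y hxy
    have e : g x.1 x.2 = g y.1 y.2 := congrArg Subtype.val hxy
    have e1 := h2 x.1 x.2
    rw [e, h2 y.1 y.2] at e1
    have e2 := h1 y.1 y.2
    rw [e1] at e2
    exact Subtype.ext (cmu_nu_inj b (h1 x.1 x.2) e2)
  obtain ⟨x, hx⟩ := (Finite.injective_iff_surjective.1 hF) ⟨w, hw⟩
  have e : g x.1 x.2 = w := congrArg Subtype.val hx
  have e1 := h2 x.1 x.2
  rw [e, hm] at e1
  exact ⟨x.1, by rw [h1 x.1 x.2, e1], x.2⟩

/-- if some stable matching gives `w` a partner she strictly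
prefers to `μ0(w)`, then there is a stable `μ'` with `μ' > μ0` in the
woman-dominance order and `μ'(w) ≻_w μ0(w)`. -/
theorem can_move_up_in_lattice {M W : Type*} [Fintype M] [Fintype W]
    (mkt : Market M W) (μ0 : Matching M W) (h0 : mkt.Stable μ0) (w : W)
    (hbetter : ∃ μs : Matching M W, mkt.Stable μs ∧
      mkt.wRank w (μ0.nu w) < mkt.wRank w (μs.nu w)) :
    ∃ μ' : Matching M W, mkt.Stable μ' ∧ mkt.StrictDom μ' μ0 ∧
      mkt.wRank w (μ0.nu w) < mkt.wRank w (μ'.nu w) := by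
  classical
  obtain ⟨μs, hs, hw⟩ := hbetter
  let nu : W → Option M := fun v =>
    if mkt.wRank v (μ0.nu v) < mkt.wRank v (μs.nu v) then μs.nu v else μ0.nu v
  have nu_pos : ∀ v, mkt.wRank v (μ0.nu v) < mkt.wRank v (μs.nu v) → nu v = μs.nu v :=
    fun v h => if_pos h
  have nu_neg : ∀ v, ¬ mkt.wRank v (μ0.nu v) < mkt.wRank v (μs.nu v) → nu v = μ0.nu v :=
    fun v h => if_neg h
  have key : ∀ v v' m, mkt.wRank v (μ0.nu v) < mkt.wRank v (μs.nu v) →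
      ¬ mkt.wRank v' (μ0.nu v') < mkt.wRank v' (μs.nu v') →
      μs.nu v = some m → μ0.nu v' = some m → False := by
    intro v v' m hv hv' e e'
    obtain ⟨m1, u, h1, h2, h3⟩ := cmu_step mkt μ0 μs h0 hs v hv
    rw [e] at h1
    obtain rfl := Option.some.inj h1
    obtain rfl := cmu_nu_inj μ0 h2 e'
    exact hv' h3
  have nu_inj : ∀ v v' m, nu v = some m → nu v' = some m → v = v' := by
    intro v v' m e e'
    by_cases hv : mkt.wRank v (μ0.nu v) < mkt.wRank v (μs.nu v) <;>
    by_cases hv' : mkt.wRank v' (μ0.nu v') < mkt.wRank v' (μs.nu v')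
    · rw [nu_pos v hv] at e; rw [nu_pos v' hv'] at e'
      exact cmu_nu_inj μs e e'
    · rw [nu_pos v hv] at e; rw [nu_neg v' hv'] at e'
      exact (key v v' m hv hv' e e').elim
    · rw [nu_neg v hv] at e; rw [nu_pos v' hv'] at e'
      exact (key v' v m hv' hv e' e).elim
    · rw [nu_neg v hv] at e; rw [nu_neg v' hv'] at e'
      exact cmu_nu_inj μ0 e e'
  let mu : M → Option W := fun m =>
    if h : ∃ v, nu v = some m then some h.choose else none
  have cons : ∀ m v, mu m = some v ↔ nu v = some m := by
    intro m v
    by_cases h : ∃ v, nu v = some m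
    · have e : mu m = some h.choose := dif_pos h
      rw [e]
      constructor
      · intro h'
        rw [← Option.some.inj h']
        exact h.choose_spec
      · intro h'
        rw [nu_inj _ _ _ h.choose_spec h']
    · have e : mu m = none := dif_neg h
      rw [e]
      constructor
      · intro h'; cases h'
      · intro h'; exact (h ⟨v, h'⟩).elim
  have ge0 : ∀ v, mkt.wRank v (μ0.nu v) ≤ mkt.wRank v (nu v) := by
    intro v
    by_cases hv : mkt.wRank v (μ0.nu v) < mkt.wRank v (μs.nu v)
    · rw [nu_pos v hv]; exact hv.le
    · rw [nu_neg v hv]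
  have ges : ∀ v, mkt.wRank v (μs.nu v) ≤ mkt.wRank v (nu v) := by
    intro v
    by_cases hv : mkt.wRank v (μ0.nu v) < mkt.wRank v (μs.nu v)
    · rw [nu_pos v hv]
    · rw [nu_neg v hv]; omega
  have muor : ∀ m, mu m = μ0.mu m ∨ mu m = μs.mu m := by
    intro m
    cases e : mu m with
    | some v =>
      have e' := (cons m v).1 e
      by_cases hv : mkt.wRank v (μ0.nu v) < mkt.wRank v (μs.nu v)
      · rw [nu_pos v hv] at e'
        exact Or.inr ((μs.consistent m v).2 e').symm
      · rw [nu_neg v hv] at e'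
        exact Or.inl ((μ0.consistent m v).2 e').symm
    | none =>
      left
      cases e0 : μ0.mu m with
      | none => rfl
      | some v =>
        exfalso
        have e1 := (μ0.consistent m v).1 e0
        by_cases hv : mkt.wRank v (μ0.nu v) < mkt.wRank v (μs.nu v)
        · obtain ⟨u, hu, hu'⟩ := cmu_back mkt μ0 μs h0 hs v m hv e1
          rw [← nu_pos u hu'] at hu
          rw [(cons m u).2 hu] at e
          cases e
        · rw [← nu_neg v hv] at e1
          rw [(cons m v).2 e1] at e
          cases e
  refine ⟨⟨mu, nu, cons⟩, ⟨⟨?_, ?_⟩, ?_⟩, ⟨ge0, ?_⟩, ?_⟩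
  · intro m v e
    change mu m = some v at e
    rcases muor m with h | h
    · rw [h] at e; exact h0.1.1 m v e
    · rw [h] at e; exact hs.1.1 m v e
  · intro v m e
    change nu v = some m at e
    by_cases hv : mkt.wRank v (μ0.nu v) < mkt.wRank v (μs.nu v)
    · rw [nu_pos v hv] at e; exact hs.1.2 v m e
    · rw [nu_neg v hv] at e; exact h0.1.2 v m e
  · rintro m v ⟨b1, b2, b3⟩
    change mu m ≠ some v at b1
    change mkt.mRank m (mu m) < _ at b2
    change mkt.wRank v (nu v) < _ at b3
    rcases muor m with h | h
    · rw [h] at b1 b2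
      exact h0.2 m v ⟨b1, b2, lt_of_le_of_lt (ge0 v) b3⟩
    · rw [h] at b1 b2
      exact hs.2 m v ⟨b1, b2, lt_of_le_of_lt (ges v) b3⟩
  · intro h
    have e : nu w = μ0.nu w := congrArg (fun x => Matching.nu x w) h
    have := ges w
    rw [e] at this
    omega
  · exact lt_of_lt_of_le hw (ges w)
end

section
/- Let μ0 and μ' be stable matchings such that μ' covers μ0 in the woman-dominance order, and let w be any woman with μ'(w) ≻_w μ0(w). Then μ' is the minimum, in the woman-dominance order, of the set of stable matchings μ satisfying μ ≥ μ0 and μ(w) ≻_w μ0(w). -/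
variable {M W : Type*}

theorem Market.aux1 {M W : Type*} (mkt : Market M W) (μ μ' : Matching M W)
    (h : mkt.Stable μ) (h' : mkt.Stable μ') (w : W)
    (hw : mkt.wRank w (μ.nu w) < mkt.wRank w (μ'.nu w)) :
    ∃ m, μ'.nu w = some m ∧ mkt.mRank m (μ'.mu m) < mkt.mRank m (μ.mu m) := by
  cases hm : μ'.nu w with
  | none =>
    rw [hm] at hw
    cases hn : μ.nu w with
    | none => rw [hn] at hw; omega
    | some m => have := h.1.2 w m hn; rw [hn] at hw; omega
  | some m =>
    refine ⟨m, rfl, ?_⟩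
    have h1 := (μ'.consistent m w).2 hm
    have hne : μ.mu m ≠ some w := by
      intro h2
      rw [(μ.consistent m w).1 h2, hm] at hw
      omega
    by_contra hc
    rw [h1] at hc
    rw [hm] at hw
    have h3 : mkt.mRank m (μ.mu m) ≠ mkt.mRank m (some w) := fun e => hne (mkt.mRank_inj m e)
    exact h.2 m w ⟨hne, by omega, hw⟩

theorem Market.aux2 {M W : Type*} (mkt : Market M W) (μ μ' : Matching M W)
    (h : mkt.Stable μ) (h' : mkt.Stable μ') (m : M)
    (hw : mkt.mRank m (μ'.mu m) < mkt.mRank m (μ.mu m)) :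
    ∃ w, μ.mu m = some w ∧ mkt.wRank w (μ.nu w) < mkt.wRank w (μ'.nu w) := by
  cases hm : μ.mu m with
  | none =>
    rw [hm] at hw
    cases hn : μ'.mu m with
    | none => rw [hn] at hw; omega
    | some w => have := h'.1.1 m w hn; rw [hn] at hw; omega
  | some w =>
    refine ⟨w, rfl, ?_⟩
    have h1 := (μ.consistent m w).1 hm
    have hne : μ'.mu m ≠ some w := by
      intro h2
      rw [h2, hm] at hw
      omega
    by_contra hc
    rw [h1] at hc
    rw [hm] at hw
    have h3 : mkt.wRank w (μ'.nu w) ≠ mkt.wRank w (some m) :=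
      fun e => hne ((μ'.consistent m w).2 (mkt.wRank_inj w e))
    exact h'.2 m w ⟨hne, hw, by omega⟩

theorem Market.aux3 {M W : Type*} [Fintype M] [Fintype W] (mkt : Market M W)
    (μ μ' : Matching M W) (h : mkt.Stable μ) (h' : mkt.Stable μ') (w : W)
    (hw : mkt.wRank w (μ.nu w) < mkt.wRank w (μ'.nu w)) :
    ∃ m, μ.nu w = some m ∧ mkt.mRank m (μ'.mu m) < mkt.mRank m (μ.mu m) := by
  choose f hf1 hf2 using mkt.aux1 μ μ' h h'
  choose g hg1 hg2 using mkt.aux2 μ μ' h h'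
  let A := {w : W // mkt.wRank w (μ.nu w) < mkt.wRank w (μ'.nu w)}
  let F : A → A := fun a => ⟨g (f a.1 a.2) (hf2 a.1 a.2), hg2 _ _⟩
  have hF : Function.Injective F := by
    rintro ⟨a, ha⟩ ⟨b, hb⟩ e
    have e1 : g (f a ha) (hf2 a ha) = g (f b hb) (hf2 b hb) := congrArg Subtype.val e
    have k1 := (μ.consistent _ _).1 (hg1 _ (hf2 a ha))
    have k2 := (μ.consistent _ _).1 (hg1 _ (hf2 b hb))
    rw [e1, k2] at k1
    have e2 : f b hb = f a ha := Option.some.inj k1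
    have k3 := (μ'.consistent _ _).2 (hf1 a ha)
    have k4 := (μ'.consistent _ _).2 (hf1 b hb)
    rw [e2, k3] at k4
    exact Subtype.ext (Option.some.inj k4)
  obtain ⟨⟨a, ha⟩, e⟩ := (Finite.injective_iff_surjective.1 hF) ⟨w, hw⟩
  have e1 : g (f a ha) (hf2 a ha) = w := congrArg Subtype.val e
  refine ⟨f a ha, ?_, hf2 a ha⟩
  rw [← e1]
  exact (μ.consistent _ _).1 (hg1 _ (hf2 a ha))

open Classical in
theorem Market.aux_meet {M W : Type*} [Fintype M] [Fintype W] (mkt : Market M W)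
    (μ μ' : Matching M W) (h : mkt.Stable μ) (h' : mkt.Stable μ') :
    ∃ σ : Matching M W, mkt.Stable σ ∧ mkt.IsMeet μ μ' σ := by
  refine ⟨⟨fun m => if mkt.mRank m (μ'.mu m) ≤ mkt.mRank m (μ.mu m) then μ.mu m else μ'.mu m,
    fun w => if mkt.wRank w (μ.nu w) ≤ mkt.wRank w (μ'.nu w) then μ.nu w else μ'.nu w, ?_⟩,
    ⟨⟨?_, ?_⟩, ?_⟩, fun w => rfl⟩
  · intro m w
    constructor
    · intro hm
      split_ifs at hm with hc
      · rcases hc.lt_or_eq with hc | hc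
        · obtain ⟨w', e, hlt⟩ := mkt.aux2 μ μ' h h' m hc
          obtain rfl : w' = w := Option.some.inj (e.symm.trans hm)
          rw [if_pos hlt.le]
          exact (μ.consistent _ _).1 hm
        · have e := mkt.mRank_inj m hc
          rw [(μ.consistent _ _).1 hm, (μ'.consistent _ _).1 (e.trans hm)]
          simp
      · obtain ⟨w', e, hlt⟩ := mkt.aux2 μ' μ h' h m (not_le.1 hc)
        obtain rfl : w' = w := Option.some.inj (e.symm.trans hm)
        rw [if_neg (not_le.2 hlt)]
        exact (μ'.consistent _ _).1 hm
    · intro hm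
      split_ifs at hm with hc
      · rcases hc.lt_or_eq with hc | hc
        · obtain ⟨m', e, hlt⟩ := mkt.aux3 μ μ' h h' w hc
          obtain rfl : m' = m := Option.some.inj (e.symm.trans hm)
          rw [if_pos hlt.le]
          exact (μ.consistent _ _).2 hm
        · have e := mkt.wRank_inj w hc
          rw [(μ.consistent _ _).2 hm, (μ'.consistent _ _).2 (e.symm.trans hm)]
          simp
      · obtain ⟨m', e, hlt⟩ := mkt.aux3 μ' μ h' h w (not_le.1 hc)
        obtain rfl : m' = m := Option.some.inj (e.symm.trans hm)
        rw [if_neg (not_le.2 hlt)]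
        exact (μ'.consistent _ _).2 hm
  · intro m w hm
    dsimp only at hm
    split_ifs at hm
    · exact h.1.1 m w hm
    · exact h'.1.1 m w hm
  · intro w m hm
    dsimp only at hm
    split_ifs at hm
    · exact h.1.2 w m hm
    · exact h'.1.2 w m hm
  · rintro m w ⟨_, h2, h3⟩
    dsimp only at h2 h3
    have h4 : mkt.mRank m (μ.mu m) < mkt.mRank m (some w) ∧
        mkt.mRank m (μ'.mu m) < mkt.mRank m (some w) := by
      split_ifs at h2 <;> constructor <;> omega
    split_ifs at h3
    · exact h.2 m w ⟨fun e => by rw [e] at h4; omega, h4.1, h3⟩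
    · exact h'.2 m w ⟨fun e => by rw [e] at h4; omega, h4.2, h3⟩

/-- if the stable matching `μ'` covers `μ0` and `μ'(w) ≻_w μ0(w)`,
then `μ'` is the minimum, in the woman-dominance order, of the set of stable
matchings `μ` with `μ ≥ μ0` and `μ(w) ≻_w μ0(w)`. -/
theorem cover_is_minimum_improvement {M W : Type*} [Fintype M] [Fintype W]
    (mkt : Market M W) (μ0 μ' : Matching M W)
    (h0 : mkt.Stable μ0) (h' : mkt.Stable μ') (hcov : mkt.Covers μ' μ0)
    (w : W) (hw : mkt.wRank w (μ0.nu w) < mkt.wRank w (μ'.nu w)) :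
    (mkt.Stable μ' ∧ mkt.Dom μ' μ0 ∧ mkt.wRank w (μ0.nu w) < mkt.wRank w (μ'.nu w)) ∧
    ∀ μ : Matching M W, mkt.Stable μ → mkt.Dom μ μ0 →
      mkt.wRank w (μ0.nu w) < mkt.wRank w (μ.nu w) → mkt.Dom μ μ' := by
  refine ⟨⟨h', hcov.1.1, hw⟩, fun μ hμ hd hlt => ?_⟩
  obtain ⟨σ, hσ, hm⟩ := mkt.aux_meet μ μ' hμ h'
  have e : μ' = σ := by
    by_contra hne
    refine hcov.2 ⟨σ, hσ, ⟨fun v => ?_, hne⟩, fun v => ?_, ?_⟩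
    · rw [hm v]; split_ifs <;> omega
    · have := hd v
      have := hcov.1.1 v
      rw [hm v]; split_ifs <;> omega
    · rintro rfl
      have := hm w
      split_ifs at this <;> rw [this] at hlt hw <;> omega
  intro v
  have := hm v
  rw [e, this]
  split_ifs with hc
  · exact le_rfl
  · omega
end

section
/- Let μ0 and μ' be stable matchings such that μ' covers μ0 in the woman-dominance order. Then there exists a list of pairs [(w_0,m_0), (w_1,m_1), …, (w_{k-1},m_{k-1})] with k ≥ 2, all women w_i distinct and all men m_i distinct, such that μ0(w_i) = m_i for each i, μ'(m_i) = w_{i+1 mod k} for each i, and every agent not appearing in the list has the same partner in μ0 and μ'; i.e., μ' is the elimination of a rotation exposed in μ0. -/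
variable {M W : Type*}

theorem Matching.ext_mu (μ ν : Matching M W) (h : ∀ m, μ.mu m = ν.mu m) : μ = ν := by
  have h1 : μ.mu = ν.mu := funext h
  have h2 : μ.nu = ν.nu := by
    funext w
    apply Option.ext
    intro m
    rw [← μ.consistent, ← ν.consistent, h m]
  cases μ; cases ν
  simp only at h1 h2
  subst h1; subst h2; rfl

theorem exists_switch (μ0 : Matching M W) (C : Set M) (s : M → W) (f : M → M)
    (hmaps : ∀ m ∈ C, f m ∈ C) (hsurj : ∀ m ∈ C, ∃ d ∈ C, f d = m)
    (hinj : ∀ a ∈ C, ∀ b ∈ C, f a = f b → a = b)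
    (hs : ∀ m ∈ C, μ0.nu (s m) = some (f m)) :
    ∃ μ : Matching M W, (∀ m ∈ C, μ.mu m = some (s m)) ∧ (∀ m ∉ C, μ.mu m = μ0.mu m) ∧
      (∀ m ∈ C, μ.nu (s m) = some m) ∧ (∀ w, (∀ m ∈ C, s m ≠ w) → μ.nu w = μ0.nu w) := by
  classical
  have sinj : ∀ a ∈ C, ∀ b ∈ C, s a = s b → a = b := by
    intro a ha b hb h
    apply hinj a ha b hb
    have h1 := hs a ha
    rw [h, hs b hb] at h1
    exact (Option.some.inj h1).symm
  let mu : M → Option W := fun m => if m ∈ C then some (s m) else μ0.mu m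
  let nu : W → Option M := fun w =>
    if h : ∃ d ∈ C, s d = w then some h.choose else μ0.nu w
  have hmu1 : ∀ m ∈ C, mu m = some (s m) := fun m hm => if_pos hm
  have hmu2 : ∀ m ∉ C, mu m = μ0.mu m := fun m hm => if_neg hm
  have hnu1 : ∀ m ∈ C, nu (s m) = some m := by
    intro m hm
    have h : ∃ d ∈ C, s d = s m := ⟨m, hm, rfl⟩
    have : nu (s m) = some h.choose := dif_pos h
    rw [this, sinj _ h.choose_spec.1 m hm h.choose_spec.2]
  have hnu2 : ∀ w, (∀ m ∈ C, s m ≠ w) → nu w = μ0.nu w := by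
    intro w hw
    apply dif_neg
    rintro ⟨d, hd, h⟩
    exact hw d hd h
  refine ⟨⟨mu, nu, ?_⟩, hmu1, hmu2, hnu1, hnu2⟩
  intro m w
  by_cases hw : ∃ d ∈ C, s d = w
  · obtain ⟨d, hd, rfl⟩ := hw
    rw [hnu1 d hd]
    by_cases hm : m ∈ C
    · rw [hmu1 m hm]
      constructor
      · intro h
        rw [sinj m hm d hd (Option.some.inj h)]
      · intro h
        rw [Option.some.inj h]
    · rw [hmu2 m hm, μ0.consistent, hs d hd]
      constructor
      · intro h
        exact absurd (Option.some.inj h ▸ hmaps d hd) hm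
      · intro h
        exact absurd (Option.some.inj h ▸ hd) hm
  · have hw' : ∀ m ∈ C, s m ≠ w := fun m hm h => hw ⟨m, hm, h⟩
    rw [hnu2 w hw', ← μ0.consistent]
    by_cases hm : m ∈ C
    · rw [hmu1 m hm]
      constructor
      · intro h
        exact absurd (Option.some.inj h) (hw' m hm)
      · intro h
        obtain ⟨d, hd, rfl⟩ := hsurj m hm
        have h1 := (μ0.consistent _ _).2 (hs d hd)
        rw [h] at h1
        exact absurd (Option.some.inj h1).symm (hw' d hd)
    · rw [hmu2 m hm]

theorem men_dom (mkt : Market M W) (μ0 μ' : Matching M W)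
    (h0 : mkt.Stable μ0) (hd : mkt.Dom μ' μ0) (m : M) :
    mkt.mRank m (μ'.mu m) ≤ mkt.mRank m (μ0.mu m) := by
  by_contra! hlt
  cases hw : μ'.mu m with
  | none =>
    rw [hw] at hlt
    cases hv : μ0.mu m with
    | none => simp [hv] at hlt
    | some v =>
      have := h0.1.1 m v hv
      rw [hv] at hlt
      omega
  | some w =>
    rw [hw] at hlt
    have hne : μ0.mu m ≠ some w := by
      intro h; rw [h] at hlt; exact lt_irrefl _ hlt
    apply h0.2 m w
    refine ⟨hne, hlt, ?_⟩
    have h1 := hd w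
    rw [(μ'.consistent m w).1 hw] at h1
    refine lt_of_le_of_ne h1 fun h => hne ((μ0.consistent m w).2 (mkt.wRank_inj w h))

theorem rural [Finite M] (mkt : Market M W) (μ0 μ' : Matching M W)
    (h0 : mkt.Stable μ0) (h' : mkt.Stable μ') (hd : mkt.Dom μ' μ0) :
    (∀ m w, μ0.mu m = some w → ∃ v, μ'.mu m = some v) ∧
    (∀ m w, μ'.mu m = some w → ∃ v, μ0.mu m = some v) ∧
    (∀ m w, μ'.mu m = some w → ∃ m1, μ0.nu w = some m1) := by
  have hA : ∀ m w, μ'.mu m = some w → ∃ v, μ0.mu m = some v := by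
    intro m w h
    have h1 := men_dom mkt μ0 μ' h0 hd m
    have h2 := h'.1.1 m w h
    cases hv : μ0.mu m with
    | none => rw [h, hv] at h1; omega
    | some v => exact ⟨v, rfl⟩
  have hB : ∀ m : {m // ∃ v, μ0.mu m = some v}, ∃ n : {m // ∃ v, μ0.mu m = some v},
      ∃ w, μ0.mu m = some w ∧ μ'.mu n = some w := by
    rintro ⟨m, w, hw⟩
    have h1 := (μ0.consistent m w).1 hw
    have h2 := h0.1.2 w m h1
    have h3 := hd w
    cases hn : μ'.nu w with
    | none => rw [h1, hn] at h3; omega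
    | some n =>
      have := (μ'.consistent n w).2 hn
      exact ⟨⟨n, hA n w this⟩, w, hw, this⟩
  choose g w hg1 hg2 using hB
  have ginj : Function.Injective g := by
    intro a b hab
    have ha := hg2 a
    rw [hab, hg2 b] at ha
    have ha1 := (μ0.consistent _ _).1 (hg1 a)
    have hb1 := (μ0.consistent _ _).1 (hg1 b)
    rw [← Option.some.inj ha, hb1] at ha1
    exact (Subtype.ext (Option.some.inj ha1)).symm
  have gsurj := Finite.surjective_of_injective ginj
  refine ⟨?_, hA, ?_⟩
  · intro m v hv
    obtain ⟨a, ha⟩ := gsurj ⟨m, v, hv⟩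
    have := hg2 a
    rw [ha] at this
    exact ⟨_, this⟩
  · intro m v hv
    obtain ⟨a, ha⟩ := gsurj ⟨m, hA m v hv⟩
    have := hg2 a
    rw [ha] at this
    simp only [hv] at this
    rw [Option.some.inj this]
    exact ⟨_, (μ0.consistent _ _).1 (hg1 a)⟩

theorem exists_next [Finite M] [Finite W] (mkt : Market M W) (μ0 μ' : Matching M W)
    (h0 : mkt.Stable μ0) (h' : mkt.Stable μ') (hd : mkt.Dom μ' μ0)
    (m : M) (hm : μ'.mu m ≠ μ0.mu m) :
    ∃ (w : W) (m2 : M) (t : W), μ0.mu m = some t ∧ μ'.mu m2 ≠ μ0.mu m2 ∧ m2 ≠ m ∧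
      μ0.nu w = some m2 ∧
      mkt.mRank m (some w) < mkt.mRank m (μ0.mu m) ∧
      mkt.wRank w (μ0.nu w) < mkt.wRank w (some m) ∧
      (∀ v, mkt.mRank m (some v) < mkt.mRank m (μ0.mu m) →
        mkt.wRank v (μ0.nu v) < mkt.wRank v (some m) →
        mkt.mRank m (some v) ≤ mkt.mRank m (some w)) ∧
      mkt.mRank m none < mkt.mRank m (some w) ∧
      mkt.wRank w (some m) ≤ mkt.wRank w (μ'.nu w) := by
  obtain ⟨r1, r2, r3⟩ := rural mkt μ0 μ' h0 h' hd
  have hmd := men_dom mkt μ0 μ' h0 hd m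
  have hlt : mkt.mRank m (μ'.mu m) < mkt.mRank m (μ0.mu m) :=
    lt_of_le_of_ne hmd fun h => hm (mkt.mRank_inj m h)
  have hv : ∃ v, μ'.mu m = some v := by
    cases hv : μ'.mu m with
    | some v => exact ⟨v, rfl⟩
    | none =>
      cases ht : μ0.mu m with
      | none => exact absurd (hv.trans ht.symm) hm
      | some t =>
        obtain ⟨v, h⟩ := r1 m t ht
        rw [hv] at h; cases h
  obtain ⟨v, hv⟩ := hv
  obtain ⟨t, ht⟩ := r2 m v hv
  let Q : Set W := {w | mkt.mRank m (some w) < mkt.mRank m (μ0.mu m) ∧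
    mkt.wRank w (μ0.nu w) < mkt.wRank w (some m)}
  have hvQ : v ∈ Q := by
    refine ⟨hv ▸ hlt, ?_⟩
    have h1 := hd v
    rw [(μ'.consistent m v).1 hv] at h1
    refine lt_of_le_of_ne h1 fun h => hm ?_
    rw [hv, (μ0.consistent m v).2 (mkt.wRank_inj v h)]
  obtain ⟨w, hwQ, hmax⟩ := Set.exists_max_image Q (fun w => mkt.mRank m (some w))
    (Set.toFinite Q) ⟨v, hvQ⟩
  have hge : mkt.mRank m (some v) ≤ mkt.mRank m (some w) := hmax v hvQ
  have hw' : mkt.wRank w (some m) ≤ mkt.wRank w (μ'.nu w) := by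
    by_cases hwv : v = w
    · subst hwv
      rw [(μ'.consistent m v).1 hv]
    · by_contra! hc
      apply h'.2 m w
      refine ⟨?_, ?_, hc⟩
      · rw [hv]; intro h; exact hwv (Option.some.inj h)
      · rw [hv]
        refine lt_of_le_of_ne hge fun h => hwv (Option.some.inj (mkt.mRank_inj m h))
  have hchg : mkt.wRank w (μ0.nu w) < mkt.wRank w (μ'.nu w) := lt_of_lt_of_le hwQ.2 hw'
  have hm2 : ∃ m2, μ0.nu w = some m2 := by
    cases hn : μ'.nu w with
    | some n => exact r3 n w ((μ'.consistent n w).2 hn)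
    | none =>
      cases hk : μ0.nu w with
      | some k => exact ⟨k, rfl⟩
      | none => rw [hn, hk] at hchg; omega
  obtain ⟨m2, hm2⟩ := hm2
  refine ⟨w, m2, t, ht, ?_, ?_, hm2, hwQ.1, hwQ.2, ?_, ?_, hw'⟩
  · intro h
    rw [(μ0.consistent m2 w).2 hm2] at h
    rw [(μ'.consistent m2 w).1 h, hm2] at hchg
    omega
  · rintro rfl
    have := hwQ.2
    rw [hm2] at this
    omega
  · intro u h1 h2
    exact hmax u ⟨h1, h2⟩
  · exact lt_of_lt_of_le (h'.1.1 m v hv) hge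

theorem cover_is_rotation_elimination {M W : Type*} [Fintype M] [Fintype W]
    (mkt : Market M W) (μ0 μ' : Matching M W)
    (h0 : mkt.Stable μ0) (h' : mkt.Stable μ') (hcov : mkt.Covers μ' μ0) :
    ∃ ρ : List (W × M), Matching.IsElimOf μ' μ0 ρ := by
  obtain ⟨⟨hd, hne⟩, hno⟩ := hcov
  have hx : ∃ x, μ'.mu x ≠ μ0.mu x := by
    by_contra! h
    exact hne (Matching.ext_mu _ _ h)
  obtain ⟨x, hx⟩ := hx
  have key := exists_next mkt μ0 μ' h0 h' hd
  haveI : Nonempty M := ⟨x⟩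
  haveI : Nonempty W := ⟨(key x hx).choose⟩
  choose! s f t ht hfD hfne hs hQ1 hQ2 hmax hir hle using key
  have hiter : ∀ n z, μ'.mu z ≠ μ0.mu z → μ'.mu (f^[n] z) ≠ μ0.mu (f^[n] z) := by
    intro n
    induction n with
    | zero => intro z hz; exact hz
    | succ n ih => intro z hz; exact ih (f z) (hfD z hz)
  have hper : ∃ y, μ'.mu y ≠ μ0.mu y ∧ ∃ k, 0 < k ∧ Function.IsPeriodicPt f k y := by
    obtain ⟨i, j, hij, he⟩ := Finite.exists_ne_map_eq_of_infinite (fun n : ℕ => f^[n] x)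
    have aux : ∀ i j : ℕ, i < j → f^[i] x = f^[j] x →
        ∃ y, μ'.mu y ≠ μ0.mu y ∧ ∃ k, 0 < k ∧ Function.IsPeriodicPt f k y := by
      intro i j hij he
      refine ⟨f^[i] x, hiter i x hx, j - i, by omega, ?_⟩
      show f^[j - i] (f^[i] x) = f^[i] x
      rw [← Function.iterate_add_apply, Nat.sub_add_cancel hij.le, he]
    rcases lt_or_gt_of_ne hij with h | h
    · exact aux i j h he
    · exact aux j i h he.symm
  obtain ⟨y, hy, k0, hk0, hpk0⟩ := hper
  obtain ⟨k, hkdef⟩ : ∃ k, k = Function.minimalPeriod f y := ⟨_, rfl⟩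
  have hk : 0 < k := hkdef ▸ hpk0.minimalPeriod_pos hk0
  have hpk : Function.IsPeriodicPt f k y := hkdef ▸ Function.isPeriodicPt_minimalPeriod f y
  let C : Set M := {m | ∃ n, f^[n] y = m}
  have hCD : ∀ m ∈ C, μ'.mu m ≠ μ0.mu m := by
    rintro m ⟨n, rfl⟩; exact hiter n y hy
  have hmaps : ∀ m ∈ C, f m ∈ C := by
    rintro m ⟨n, rfl⟩
    exact ⟨n + 1, Function.iterate_succ_apply' f n y⟩
  have hCper : ∀ m ∈ C, f^[k] m = m := by
    rintro m ⟨n, rfl⟩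
    exact hpk.apply_iterate n
  obtain ⟨k1, rfl⟩ : ∃ k1, k = k1 + 1 := ⟨k - 1, by omega⟩
  have hsurj : ∀ m ∈ C, ∃ d ∈ C, f d = m := by
    intro m hm
    refine ⟨f^[k1] m, ?_, ?_⟩
    · obtain ⟨n, rfl⟩ := hm
      exact ⟨k1 + n, Function.iterate_add_apply f k1 n y⟩
    · rw [← Function.iterate_succ_apply' f]; exact hCper m hm
  have hinj : ∀ a ∈ C, ∀ b ∈ C, f a = f b → a = b := by
    intro a ha b hb h
    rw [← hCper a ha, ← hCper b hb, Function.iterate_succ_apply, Function.iterate_succ_apply, h]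
  obtain ⟨ν, n1, n2, n3, n4⟩ := exists_switch μ0 C s f hmaps hsurj hinj
    (fun m hm => hs m (hCD m hm))
  have hyC : y ∈ C := ⟨0, rfl⟩
  have hν0 : mkt.Dom ν μ0 := by
    intro w
    by_cases hw : ∃ m ∈ C, s m = w
    · obtain ⟨m, hm, rfl⟩ := hw
      rw [n3 m hm]
      exact (hQ2 m (hCD m hm)).le
    · rw [n4 w fun m hm h => hw ⟨m, hm, h⟩]
  have hν' : mkt.Dom μ' ν := by
    intro w
    by_cases hw : ∃ m ∈ C, s m = w
    · obtain ⟨m, hm, rfl⟩ := hw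
      rw [n3 m hm]
      exact hle m (hCD m hm)
    · rw [n4 w fun m hm h => hw ⟨m, hm, h⟩]
      exact hd w
  have hνne : ν ≠ μ0 := by
    intro h
    have h1 := hQ1 y hy
    rw [← n1 y hyC, h] at h1
    exact lt_irrefl _ h1
  have hνst : mkt.Stable ν := by
    refine ⟨⟨?_, ?_⟩, ?_⟩
    · intro m w hw
      by_cases hm : m ∈ C
      · rw [n1 m hm] at hw
        rw [← hw]
        exact hir m (hCD m hm)
      · rw [n2 m hm] at hw
        exact h0.1.1 m w hw
    · intro w m hm
      by_cases hw : ∃ m ∈ C, s m = w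
      · obtain ⟨d, hdC, rfl⟩ := hw
        rw [n3 d hdC] at hm
        rw [← hm]
        have h1 := hQ2 d (hCD d hdC)
        have h2 := hs d (hCD d hdC)
        have h3 := h0.1.2 _ _ h2
        rw [h2] at h1
        omega
      · rw [n4 w fun m hm h => hw ⟨m, hm, h⟩] at hm
        exact h0.1.2 w m hm
    · rintro m w ⟨b1, b2, b3⟩
      have b4 : mkt.wRank w (μ0.nu w) < mkt.wRank w (some m) := lt_of_le_of_lt (hν0 w) b3
      have b5 : μ0.mu m ≠ some w := by
        intro h
        rw [(μ0.consistent m w).1 h] at b4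
        exact lt_irrefl _ b4
      by_cases hm : m ∈ C
      · rw [n1 m hm] at b2
        rcases lt_trichotomy (mkt.mRank m (some w)) (mkt.mRank m (μ0.mu m)) with h | h | h
        · have := hmax m (hCD m hm) w h b4
          omega
        · exact b5 (mkt.mRank_inj m h).symm
        · exact h0.2 m w ⟨b5, h, b4⟩
      · rw [n2 m hm] at b2
        exact h0.2 m w ⟨b5, b2, b4⟩
  have hEq : μ' = ν := by
    by_contra h
    exact hno ⟨ν, hνst, ⟨hν', h⟩, ⟨hν0, hνne⟩⟩
  subst hEq
  have htf : ∀ m ∈ C, t (f m) = s m := by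
    intro m hm
    have h1 := ht (f m) (hfD m (hCD m hm))
    rw [(μ0.consistent _ _).2 (hs m (hCD m hm))] at h1
    exact (Option.some.inj h1).symm
  have hmod : ∀ n, f^[n % (k1 + 1)] y = f^[n] y := fun n => hpk.iterate_mod_apply n
  have htnu : ∀ m ∈ C, μ0.nu (t m) = some m := fun m hm =>
    (μ0.consistent _ _).1 (ht m (hCD m hm))
  have hinjr : ∀ i < k1 + 1, ∀ j < k1 + 1, f^[i] y = f^[j] y → i = j := by
    intro i hi j hj h
    rw [hkdef] at hi hj
    exact Function.iterate_injOn_Iio_minimalPeriod hi hj h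
  refine ⟨(List.range (k1 + 1)).map fun i => (t (f^[i] y), f^[i] y), ?_, ?_, ?_, ?_, ?_, ?_, ?_⟩
  · rw [List.length_map, List.length_range]
    by_contra hlt
    have : k1 = 0 := by omega
    subst this
    exact hfne y hy hpk
  · rw [List.map_map]
    refine List.Nodup.map_on ?_ List.nodup_range
    intro i hi j hj h
    refine hinjr i (List.mem_range.1 hi) j (List.mem_range.1 hj) ?_
    have h1 := htnu (f^[i] y) ⟨i, rfl⟩
    have h2 := htnu (f^[j] y) ⟨j, rfl⟩
    simp only [Function.comp] at h
    rw [h, h2] at h1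
    exact (Option.some.inj h1).symm
  · rw [List.map_map]
    refine List.Nodup.map_on ?_ List.nodup_range
    intro i hi j hj h
    exact hinjr i (List.mem_range.1 hi) j (List.mem_range.1 hj) h
  · intro i
    simp only [List.get_eq_getElem, List.getElem_map, List.getElem_range]
    exact htnu _ ⟨_, rfl⟩
  · intro i
    simp only [List.get_eq_getElem, List.getElem_map, List.getElem_range, List.length_map,
      List.length_range]
    rw [hmod, n1 _ ⟨_, rfl⟩, Function.iterate_succ_apply', htf _ ⟨_, rfl⟩]
  · intro m hm
    apply n2
    rintro ⟨n, rfl⟩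
    apply hm
    simp only [List.map_map, List.mem_map, List.mem_range, Function.comp]
    exact ⟨n % (k1 + 1), Nat.mod_lt _ hk, hmod n⟩
  · intro w hw
    apply n4
    rintro m hm rfl
    apply hw
    rw [← htf m hm]
    obtain ⟨n, hn⟩ := hmaps m hm
    simp only [List.map_map, List.mem_map, List.mem_range, Function.comp]
    exact ⟨n % (k1 + 1), Nat.mod_lt _ hk, by rw [hmod n, hn]⟩
end

section
/- A man m and woman w are stable partners (matched in some stable matching) if and only if the pair (w,m) appears in some rotation in Π, or m and w are matched in the woman-optimal stable matching. -/
variable {M W : Type*}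

theorem exists_argmin {α : Type*} (P : α → Prop) (f : α → ℕ) (h : ∃ x, P x) :
    ∃ x, P x ∧ ∀ y, P y → f x ≤ f y := by
  obtain ⟨x, hx⟩ := h
  obtain ⟨a, ha, hm⟩ := (measure f).wf.has_min {x | P x} ⟨x, hx⟩
  exact ⟨a, ha, fun y hy => not_lt.mp (hm y hy)⟩

theorem Matching.ext_nu {μ μ' : Matching M W} (h : ∀ w, μ.nu w = μ'.nu w) : μ = μ' := by
  have h1 : μ.nu = μ'.nu := funext h
  have h2 : μ.mu = μ'.mu := by
    funext m
    apply Option.ext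
    intro w
    rw [μ.consistent, μ'.consistent, h]
  cases μ; cases μ'; simp_all

theorem stable_le (mkt : Market M W) {μ : Matching M W} (hs : mkt.Stable μ) {m : M} {w : W}
    (h : mkt.wRank w (μ.nu w) < mkt.wRank w (some m)) :
    mkt.mRank m (some w) < mkt.mRank m (μ.mu m) := by
  have hne : μ.mu m ≠ some w := by
    intro h1
    rw [(μ.consistent m w).1 h1] at h
    exact lt_irrefl _ h
  by_contra hc
  apply hs.2 m w
  refine ⟨hne, lt_of_le_of_ne (not_lt.mp hc) ?_, h⟩
  intro h2
  exact hne (mkt.mRank_inj m h2)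

theorem none_le_w (mkt : Market M W) {μ : Matching M W} (hs : mkt.Stable μ) (w : W) :
    mkt.wRank w none ≤ mkt.wRank w (μ.nu w) := by
  cases h : μ.nu w with
  | none => exact le_rfl
  | some m => exact (hs.1.2 w m h).le

theorem none_le_m (mkt : Market M W) {μ : Matching M W} (hs : mkt.Stable μ) (m : M) :
    mkt.mRank m none ≤ mkt.mRank m (μ.mu m) := by
  cases h : μ.mu m with
  | none => exact le_rfl
  | some w => exact (hs.1.1 m w h).le

/-- Changed women are matched below, and their old partner moves to a worse changed woman. -/
theorem changed_matched [Finite W] (mkt : Market M W) {μ ν : Matching M W}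
    (hμ : mkt.Stable μ) (hν : mkt.Stable ν) (hd : mkt.Dom ν μ) (w : W) (hw : ν.nu w ≠ μ.nu w) :
    ∃ m w2, μ.nu w = some m ∧ ν.mu m = some w2 ∧ ν.nu w2 ≠ μ.nu w2 ∧
      mkt.mRank m (some w2) < mkt.mRank m (some w) := by
  have key : ∀ w : {w // ν.nu w ≠ μ.nu w}, ∃ w' : {w // ν.nu w ≠ μ.nu w}, ∃ m,
      ν.nu w.1 = some m ∧ μ.nu w'.1 = some m ∧
      mkt.mRank m (some w.1) < mkt.mRank m (some w'.1) := by
    rintro ⟨w, hw⟩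
    have hlt : mkt.wRank w (μ.nu w) < mkt.wRank w (ν.nu w) :=
      lt_of_le_of_ne (hd w) (fun h => hw (mkt.wRank_inj w h).symm)
    cases hm : ν.nu w with
    | none =>
      rw [hm] at hlt
      exact absurd (none_le_w mkt hμ w) (not_le.mpr hlt)
    | some m =>
      rw [hm] at hlt
      have h1 := stable_le mkt hμ hlt
      have h2 := hν.1.1 m w ((ν.consistent m w).2 hm)
      cases hw' : μ.mu m with
      | none => rw [hw'] at h1; omega
      | some w' =>
        rw [hw'] at h1
        have h3 := (μ.consistent m w').1 hw'
        refine ⟨⟨w', ?_⟩, m, rfl, h3, h1⟩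
        rw [h3]
        intro h4
        have h5 := (ν.consistent m w').2 h4
        rw [(ν.consistent m w).2 hm] at h5
        cases h5
        exact lt_irrefl _ h1
  choose g hg using key
  have hinj : Function.Injective g := by
    intro a b hab
    obtain ⟨m, h1, h2, -⟩ := hg a
    obtain ⟨m', h1', h2', -⟩ := hg b
    rw [hab, h2'] at h2
    cases h2
    have := (ν.consistent _ _).2 h1
    rw [(ν.consistent _ _).2 h1'] at this
    exact Subtype.ext (Option.some.inj this).symm
  obtain ⟨x, hx⟩ := Finite.surjective_of_injective hinj ⟨w, hw⟩
  obtain ⟨m, h1, h2, h3⟩ := hg x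
  rw [hx] at h2 h3
  exact ⟨m, x.1, h2, (ν.consistent _ _).2 h1, x.2, h3⟩

theorem next_woman [Fintype W] (mkt : Market M W) {μ ν : Matching M W}
    (hμ : mkt.Stable μ) (hν : mkt.Stable ν) (hd : mkt.Dom ν μ) (w : W) (hw : ν.nu w ≠ μ.nu w) :
    ∃ m s, μ.nu w = some m ∧ ν.nu s ≠ μ.nu s ∧
      mkt.mRank m (some s) < mkt.mRank m (some w) ∧
      mkt.mRank m none < mkt.mRank m (some s) ∧
      mkt.wRank s (μ.nu s) < mkt.wRank s (some m) ∧
      mkt.wRank s (some m) ≤ mkt.wRank s (ν.nu s) ∧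
      ∀ w', mkt.mRank m (some w') < mkt.mRank m (some w) →
        mkt.wRank w' (μ.nu w') < mkt.wRank w' (some m) →
        mkt.mRank m (some w') ≤ mkt.mRank m (some s) := by
  classical
  obtain ⟨m, w2, h1, h2, h3, h4⟩ := changed_matched mkt hμ hν hd w hw
  have h2' := (ν.consistent _ _).1 h2
  have hlt2 : mkt.wRank w2 (μ.nu w2) < mkt.wRank w2 (some m) := by
    rw [← h2']
    exact lt_of_le_of_ne (hd w2) (fun h => h3 (mkt.wRank_inj w2 h).symm)
  obtain ⟨s, hs, hmax⟩ := Finset.exists_max_image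
    (Finset.univ.filter fun w' => mkt.mRank m (some w') < mkt.mRank m (some w) ∧
      mkt.wRank w' (μ.nu w') < mkt.wRank w' (some m)) (fun w' => mkt.mRank m (some w'))
    ⟨w2, by simp [h4, hlt2]⟩
  simp only [Finset.mem_filter, Finset.mem_univ, true_and] at hs hmax
  have hle : mkt.mRank m (some w2) ≤ mkt.mRank m (some s) := hmax w2 ⟨h4, hlt2⟩
  have hw2 := hν.1.1 m w2 h2
  have hb : mkt.wRank s (some m) ≤ mkt.wRank s (ν.nu s) := by
    by_contra hc
    have := stable_le mkt hν (not_le.mp hc)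
    rw [h2] at this
    omega
  refine ⟨m, s, h1, ?_, hs.1, by omega, hs.2, hb, fun w' a b => hmax w' ⟨a, b⟩⟩
  intro h
  rw [h] at hb
  exact absurd hs.2 (not_lt.mpr hb)

/-- A cycle list of a self map of a finite type. -/
theorem exists_cycle {α : Type*} [Finite α] [Nonempty α] (s : α → α) (hs : ∀ x, s x ≠ x) :
    ∃ l : List α, 2 ≤ l.length ∧ l.Nodup ∧ ∀ (i : ℕ) (hi : i < l.length),
      s l[i] = l[(i+1) % l.length]'(Nat.mod_lt _ (by omega)) := by
  obtain ⟨a⟩ := ‹Nonempty α›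
  obtain ⟨i, j, hij, he⟩ := Finite.exists_ne_map_eq_of_infinite (fun n : ℕ => s^[n] a)
  have hp : ∃ x, x ∈ Function.periodicPts s := by
    rcases lt_or_gt_of_ne hij with h | h
    · refine ⟨s^[i] a, Function.mk_mem_periodicPts (n := j - i) (by omega) ?_⟩
      change s^[j-i] (s^[i] a) = s^[i] a
      rw [← Function.iterate_add_apply, Nat.sub_add_cancel h.le]; exact he.symm
    · refine ⟨s^[j] a, Function.mk_mem_periodicPts (n := i - j) (by omega) ?_⟩
      change s^[i-j] (s^[j] a) = s^[j] a
      rw [← Function.iterate_add_apply, Nat.sub_add_cancel h.le]; exact he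
  obtain ⟨x, hx⟩ := hp
  have hpos := Function.minimalPeriod_pos_of_mem_periodicPts hx
  have hne1 : Function.minimalPeriod s x ≠ 1 := by
    intro h
    exact hs x (Function.minimalPeriod_eq_one_iff_isFixedPt.1 h)
  refine ⟨(List.range (Function.minimalPeriod s x)).map (fun n => s^[n] x), ?_, ?_, ?_⟩
  · simp; omega
  · refine List.Nodup.map_on ?_ List.nodup_range
    intro a ha b hb hab
    rw [List.mem_range] at ha hb
    exact Function.iterate_injOn_Iio_minimalPeriod ha hb hab
  · intro i hi
    simp only [List.getElem_map, List.getElem_range, List.length_map, List.length_range]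
    rw [Function.iterate_mod_minimalPeriod_eq, Function.iterate_succ_apply']

theorem cover_is_rotation [Fintype W] (mkt : Market M W) {μ ν : Matching M W}
    (hμ : mkt.Stable μ) (hν : mkt.Stable ν) (hc : mkt.Covers ν μ) (w : W) (m : M)
    (hw : ν.nu w ≠ μ.nu w) (hm : μ.nu w = some m) :
    ∃ ρ : List (W × M), mkt.ExposedRotation μ ρ ∧ (w, m) ∈ ρ := by
  classical
  have hd : mkt.Dom ν μ := hc.1.1
  choose p s0 hp hs1 hs2 hs3 hs4 hs5 hs6 using
    fun w : {w // ν.nu w ≠ μ.nu w} => next_woman mkt hμ hν hd w.1 w.2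
  have : Nonempty {w // ν.nu w ≠ μ.nu w} := ⟨⟨w, hw⟩⟩
  obtain ⟨l, hl2, hnd, hcyc⟩ := exists_cycle
    (fun x : {w // ν.nu w ≠ μ.nu w} => (⟨s0 x, hs1 x⟩ : {w // ν.nu w ≠ μ.nu w}))
    (fun x h => by
      have h1 : s0 x = x.1 := congrArg Subtype.val h
      have h2 := hs2 x
      rw [h1] at h2
      exact lt_irrefl _ h2)
  have hndL : (l.map Subtype.val).Nodup := hnd.map Subtype.val_injective
  obtain ⟨e, he⟩ : ∃ e : Equiv.Perm W, e = (l.map Subtype.val).formPerm := ⟨_, rfl⟩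
  have he1 : ∀ (i : ℕ) (hi : i < l.length),
      e l[i].1 = (l[(i+1) % l.length]'(Nat.mod_lt _ (by omega))).1 := by
    intro i hi
    have := List.formPerm_apply_getElem (l.map Subtype.val) hndL i (by simpa using hi)
    rw [← he] at this
    simpa using this
  have he2 : ∀ x ∈ l, e x.1 = s0 x := by
    intro x hx
    obtain ⟨i, hi, rfl⟩ := List.getElem_of_mem hx
    rw [he1 i hi, ← hcyc i hi]
  have he3 : ∀ x, x ∉ l.map Subtype.val → e x = x := by
    intro x hx
    rw [he]
    exact List.formPerm_apply_of_notMem hx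
  let σ : Matching M W :=
    { mu := fun m => (μ.mu m).map e
      nu := fun w => μ.nu (e.symm w)
      consistent := by
        intro m w
        rw [← μ.consistent]
        simp only [Option.map_eq_some_iff]
        constructor
        · rintro ⟨a, h1, rfl⟩
          simpa using h1
        · intro h
          exact ⟨_, h, by simp⟩ }
  have hσmu : ∀ m, σ.mu m = (μ.mu m).map e := fun _ => rfl
  have hσnu : ∀ w, σ.nu (e w) = μ.nu w := fun w => by
    change μ.nu (e.symm (e w)) = _
    simp
  have hdich : ∀ y, (∃ x ∈ l, y = x.1 ∧ e y = s0 x) ∨ e y = y := by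
    intro y
    by_cases hy : y ∈ l.map Subtype.val
    · obtain ⟨x, hx, rfl⟩ := List.mem_map.1 hy
      exact Or.inl ⟨x, hx, rfl, he2 x hx⟩
    · exact Or.inr (he3 y hy)
  have hσμ : mkt.Dom σ μ := by
    intro w
    obtain ⟨y, rfl⟩ := e.surjective w
    rw [hσnu]
    rcases hdich y with ⟨x, hx, rfl, h⟩ | h
    · rw [h, hp x]; exact (hs4 x).le
    · rw [h]
  have hνσ : mkt.Dom ν σ := by
    intro w
    obtain ⟨y, rfl⟩ := e.surjective w
    rw [hσnu]
    rcases hdich y with ⟨x, hx, rfl, h⟩ | h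
    · rw [h, hp x]; exact hs5 x
    · rw [h]; exact hd y
  have hσs : mkt.Stable σ := by
    refine ⟨⟨?_, ?_⟩, ?_⟩
    · intro m w h
      rw [hσmu, Option.map_eq_some_iff] at h
      obtain ⟨y, h1, rfl⟩ := h
      rcases hdich y with ⟨x, hx, rfl, h⟩ | h
      · rw [h]
        have h2 := (μ.consistent _ _).1 h1
        rw [hp x] at h2
        cases h2
        exact hs3 x
      · rw [h]; exact hμ.1.1 _ _ h1
    · intro w m h
      have h1 := none_le_w mkt hμ w
      have h2 := hσμ w
      rw [h] at h2
      refine lt_of_le_of_ne (h1.trans h2) (fun h3 => ?_)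
      cases mkt.wRank_inj w h3
    · rintro m w ⟨hne, hb1, hb2⟩
      have hlt := lt_of_le_of_lt (hσμ w) hb2
      have h1 := stable_le mkt hμ hlt
      rw [hσmu] at hb1
      cases hm : μ.mu m with
      | none => rw [hm] at h1 hb1; exact lt_asymm h1 hb1
      | some y =>
        rw [hm] at h1 hb1
        simp only [Option.map_some] at hb1
        rcases hdich y with ⟨x, hx, rfl, h⟩ | h
        · rw [h] at hb1
          have h2 := (μ.consistent _ _).1 hm
          rw [hp x] at h2
          cases h2
          exact absurd (hs6 x w h1 hlt) (not_le.mpr hb1)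
        · rw [h] at hb1; exact lt_asymm h1 hb1
  have hσne : σ ≠ μ := by
    intro h
    have hx : l[0] ∈ l := List.getElem_mem _
    have h1 := hσnu l[0].1
    rw [he2 _ hx, hp, h] at h1
    have h2 := hs4 l[0]
    rw [h1] at h2
    exact lt_irrefl _ h2
  have hσν : ν = σ := by
    by_contra hne
    exact hc.2 ⟨σ, hσs, ⟨hνσ, hne⟩, ⟨hσμ, hσne⟩⟩
  have hfst : (l.map fun x => (x.1, p x)).map Prod.fst = l.map Subtype.val := by
    rw [List.map_map]; rfl
  have hsnd : (l.map fun x => (x.1, p x)).map Prod.snd = l.map p := by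
    rw [List.map_map]; rfl
  have hpm : ∀ x, μ.mu (p x) = some x.1 := fun x => (μ.consistent _ _).2 (hp x)
  refine ⟨l.map fun x => (x.1, p x), ⟨ν, ⟨?_, ?_, ?_, ?_, ?_, ?_, ?_⟩, hν, hc⟩, ?_⟩
  · simpa using hl2
  · rw [hfst]; exact hndL
  · rw [hsnd]
    refine hnd.map ?_
    intro a b hab
    have h1 := hpm a
    rw [hab, hpm b] at h1
    exact Subtype.ext (Option.some.inj h1).symm
  · intro i
    simp [hp]
  · rintro ⟨i, hi⟩
    have hi' : i < l.length := by simpa using hi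
    have hνmu : ∀ m, ν.mu m = (μ.mu m).map e := fun m => by rw [← hσmu, ← hσν]
    simp [hνmu, hpm, he1 i hi']
  · intro m hm
    rw [hsnd] at hm
    rw [hσν, hσmu]
    cases h : μ.mu m with
    | none => rfl
    | some y =>
      rcases hdich y with ⟨x, hx, rfl, h'⟩ | h'
      · exfalso
        apply hm
        have h2 := (μ.consistent _ _).1 h
        rw [hp x] at h2
        cases h2
        exact List.mem_map_of_mem hx
      · simp [h']
  · intro w hw
    rw [hfst] at hw
    rw [hσν]
    have := hσnu w
    rwa [he3 w hw] at this
  · by_cases hwl : w ∈ l.map Subtype.val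
    · obtain ⟨x, hx, rfl⟩ := List.mem_map.1 hwl
      rw [hp x] at hm
      cases hm
      exact List.mem_map.2 ⟨x, hx, rfl⟩
    · exfalso
      apply hw
      rw [hσν]
      have := hσnu w
      rwa [he3 w hwl] at this

theorem strictDom_sum [Fintype W] (mkt : Market M W) {μ ν : Matching M W}
    (h : mkt.StrictDom ν μ) :
    ∑ w, mkt.wRank w (μ.nu w) < ∑ w, mkt.wRank w (ν.nu w) := by
  refine Finset.sum_lt_sum (fun w _ => h.1 w) ?_
  by_contra hc
  push Not at hc
  apply h.2
  apply Matching.ext_nu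
  intro w
  exact mkt.wRank_inj w (le_antisymm (hc w (Finset.mem_univ w)) (h.1 w))

/-- `m` and `w` are stable partners iff the pair `(w, m)` appears
in some rotation in `Π`, or `m` and `w` are matched in the woman-optimal
stable matching. -/
theorem stable_partners_iff_rotation_or_top {M W : Type*} [Fintype M] [Fintype W]
    (mkt : Market M W) (μtop : Matching M W) (htop : mkt.Stable μtop)
    (hopt : ∀ μ : Matching M W, mkt.Stable μ → mkt.Dom μtop μ)
    (m : M) (w : W) :
    (∃ μ : Matching M W, mkt.Stable μ ∧ μ.mu m = some w) ↔
      ((∃ ρ : List (W × M), mkt.InPi ρ ∧ (w, m) ∈ ρ) ∨ μtop.mu m = some w) := by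
  constructor
  · rintro ⟨μ, hμ, hmw⟩
    by_cases ht : μtop.mu m = some w
    · exact Or.inr ht
    left
    let Φ : Matching M W → ℕ := fun μ => ∑ w, mkt.wRank w (μ.nu w)
    have hle : ∀ μ, mkt.Stable μ → Φ μ ≤ Φ μtop := fun μ h =>
      Finset.sum_le_sum fun w _ => hopt μ h w
    obtain ⟨μ1, ⟨h1s, h1w⟩, h1max⟩ := exists_argmin
      (fun μ => mkt.Stable μ ∧ μ.mu m = some w) (fun μ => Φ μtop - Φ μ) ⟨μ, hμ, hmw⟩
    obtain ⟨ν, ⟨hνs, hνd⟩, hνmin⟩ := exists_argmin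
      (fun ν => mkt.Stable ν ∧ mkt.StrictDom ν μ1) Φ
      ⟨μtop, htop, hopt μ1 h1s, fun h => ht (h ▸ h1w)⟩
    have hcov : mkt.Covers ν μ1 := by
      refine ⟨hνd, ?_⟩
      rintro ⟨κ, hκ, hκ1, hκ2⟩
      exact absurd (hνmin κ ⟨hκ, hκ2⟩) (not_le.mpr (strictDom_sum mkt hκ1))
    have h1n := (μ1.consistent m w).1 h1w
    have hch : ν.nu w ≠ μ1.nu w := by
      intro h
      rw [h1n] at h
      have h2 := h1max ν ⟨hνs, (ν.consistent m w).2 h⟩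
      have h3 : Φ μ1 < Φ ν := strictDom_sum mkt hνd
      have h4 := hle ν hνs
      omega
    obtain ⟨ρ, hρ, hmem⟩ := cover_is_rotation mkt h1s hνs hcov w m hch h1n
    exact ⟨ρ, ⟨μ1, h1s, hρ⟩, hmem⟩
  · rintro (⟨ρ, ⟨μ, hμ, ν, hel, -, -⟩, hmem⟩ | h)
    · obtain ⟨i, hi⟩ := List.get_of_mem hmem
      have := hel.2.2.2.1 i
      rw [hi] at this
      exact ⟨μ, hμ, (μ.consistent m w).2 this⟩
    · exact ⟨μtop, htop, h⟩
end
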